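/- Let K be an infinite field, S = K[x_1,...,x_n], and fix an integer j. Let I ⊆ S and J ⊆ S be homogeneous ideals. Then for a general change of coordinates g ∈ GL_n(K), one has dim_K Tor_i^S(S/I, S/g(J))_j ≤ dim_K Tor_i^S(S/Gin_lex(I), S/Gin_oplex(J))_j for all i ≥ 0. -/

import Mathlib

open MvPolynomial TensorProduct CategoryTheory

noncomputable section

/-- The polynomial ring `S = K[x_1,...,x_n]`, standard graded. -/
abbrev PS (K : Type) [Field K] (n : ℕ) : Type := MvPolynomial (Fin n) K

variable (K : Type) [Field K] (n : ℕ)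

/-- An ideal of `S` is homogeneous if it contains all homogeneous components of its
elements. -/
def IsHomog (I : Ideal (PS K n)) : Prop :=
  ∀ f ∈ I, ∀ d : ℕ, MvPolynomial.homogeneousComponent d f ∈ I

/-- The change of coordinates of `S` induced by `g ∈ GL_n(K)`, determined by
`g(x_i) = ∑_j g_{ji} x_j`. -/
def coordChange (g : GL (Fin n) K) : PS K n →ₐ[K] PS K n :=
  MvPolynomial.aeval (fun i => ∑ j, ((g : Matrix (Fin n) (Fin n) K) j i) • MvPolynomial.X j)

/-- A property `P` holds for a general change of coordinates `g ∈ GL_n(K)` if there is a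
nonempty Zariski open subset `U ⊆ GL_n(K)` on which it holds; equivalently (as `GL_n(K)` is
an irreducible variety over the infinite field `K`) there is a nonzero polynomial `F` in the
matrix entries such that `P g` holds whenever `F` does not vanish at `g`. -/
def generally (P : GL (Fin n) K → Prop) : Prop :=
  ∃ F : MvPolynomial (Fin n × Fin n) K, F ≠ 0 ∧
    ∀ g : GL (Fin n) K,
      MvPolynomial.eval (fun p => (g : Matrix (Fin n) (Fin n) K) p.1 p.2) F ≠ 0 → P g

/-- The standard grading of `S = K[x_1,...,x_n]`, extended to `ℤ` (zero in negative
degrees). -/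
def polyGrade (d : ℤ) : Submodule K (PS K n) :=
  if 0 ≤ d then homogeneousSubmodule (Fin n) K d.toNat else ⊥

/-- The degree `d` component of the (internal) tensor-product grading on `A ⊗[K] B`. -/
def tensorGrade {A B : Type} [AddCommGroup A] [Module K A] [AddCommGroup B] [Module K B]
    (GA : ℤ → Submodule K A) (GB : ℤ → Submodule K B) (d : ℤ) :
    Submodule K (A ⊗[K] B) :=
  ⨆ p : ℤ, LinearMap.range (TensorProduct.map (GA p).subtype (GB (d - p)).subtype)

variable (N : Type) [AddCommGroup N] [Module K N] [Module (PS K n) N]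
  [IsScalarTower K (PS K n) N]

/-- The tower of `K`-vector spaces `D_i = S^{⊗ i} ⊗_K N` appearing in the bar complex
`M ⊗_K S^{⊗ i} ⊗_K N`, which computes `Tor^S_i(M, N)`. -/
def barD : ℕ → ModuleCat K
  | 0 => ModuleCat.of K N
  | (i + 1) => ModuleCat.of K (PS K n ⊗[K] (barD i))

/-- The internal `ℤ`-grading on `D_i = S^{⊗ i} ⊗_K N` induced by the standard grading of
`S` and a grading `GN` of `N`. -/
def barDGrade (GN : ℤ → Submodule K N) : (i : ℕ) → ℤ → Submodule K (barD K n N i)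
  | 0 => GN
  | (i + 1) => tensorGrade K (polyGrade K n) (barDGrade GN i)

/-- Scalar multiplication `S → N → N` as a `K`-bilinear map. -/
def smulBilin : PS K n →ₗ[K] N →ₗ[K] N :=
  LinearMap.mk₂ K (fun s x => s • x)
    (fun s₁ s₂ x => add_smul s₁ s₂ x)
    (fun c s x => smul_assoc c s x)
    (fun s x y => smul_add s x y)
    (fun c s x => (smul_comm c s x).symm)

/-- The "contraction" part of the bar differential, `c_i : D_{i+1} → D_i`, defined
recursively by `c_0(s ⊗ x) = s • x` and
`c_{i+1}(s ⊗ s' ⊗ t) = (s s') ⊗ t - s ⊗ c_i(s' ⊗ t)`. -/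
def barC : (i : ℕ) → ((barD K n N (i + 1)) →ₗ[K] (barD K n N i))
  | 0 => TensorProduct.lift (smulBilin K n N)
  | (i + 1) =>
      (TensorProduct.map (LinearMap.mul' K (PS K n)) LinearMap.id).comp
        (TensorProduct.assoc K (PS K n) (PS K n) (barD K n N i)).symm.toLinearMap
      - TensorProduct.map LinearMap.id (barC i)

variable (M : Type) [AddCommGroup M] [Module K M] [Module (PS K n) M]
  [IsScalarTower K (PS K n) M]

/-- Right scalar multiplication `M ⊗[K] S → M` as a `K`-linear map. -/
def smulMapM : M ⊗[K] PS K n →ₗ[K] M :=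
  TensorProduct.lift (LinearMap.mk₂ K (fun m s => s • m)
    (fun m₁ m₂ s => smul_add s m₁ m₂)
    (fun c m s => smul_comm s c m)
    (fun m s₁ s₂ => add_smul s₁ s₂ m)
    (fun c m s => smul_assoc c s m))

/-- The bar differential `b_i : M ⊗ D_{i+1} → M ⊗ D_i`,
`b(m ⊗ s ⊗ t) = (s • m) ⊗ t - m ⊗ c_i(s ⊗ t)`.  The complex
`⋯ → M ⊗_K S^{⊗ i} ⊗_K N → ⋯ → M ⊗_K S ⊗_K N → M ⊗_K N → 0`
is the bar complex `M ⊗_S Bar(S, N)`, whose `i`-th homology is `Tor^S_i(M, N)`;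
it is a complex of graded vector spaces with degree-preserving differentials. -/
def barB (i : ℕ) : (M ⊗[K] (barD K n N (i + 1))) →ₗ[K] (M ⊗[K] (barD K n N i)) :=
  (TensorProduct.map (smulMapM K n M) LinearMap.id).comp
      (TensorProduct.assoc K M (PS K n) (barD K n N i)).symm.toLinearMap
  - TensorProduct.map LinearMap.id (barC K n N i)

/-- `dim_K Tor_i^S(M, N)_j`, the dimension of the degree-`j` component of the graded module
`Tor_i^S(M, N)` for graded modules `M`, `N`: it is computed as the homology of the degree-`j`
strand of the bar complex, namely `dim (ker b_i)_j - dim (im b_{i+1})_j`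
(for `i = 0`, `dim (M ⊗_K N)_j - dim (im b_1)_j`). -/
def torStrandDim (GM : ℤ → Submodule K M) (GN : ℤ → Submodule K N) : ℕ → ℤ → ℕ
  | 0, j =>
      Module.finrank K ↥(tensorGrade K GM (barDGrade K n N GN 0) j) -
        Module.finrank K
          ↥(LinearMap.range (barB K n N M 0) ⊓ tensorGrade K GM (barDGrade K n N GN 0) j)
  | (i + 1), j =>
      Module.finrank K
          ↥(LinearMap.ker (barB K n N M i) ⊓
              tensorGrade K GM (barDGrade K n N GN (i + 1)) j) -
        Module.finrank K
          ↥(LinearMap.range (barB K n N M (i + 1)) ⊓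
              tensorGrade K GM (barDGrade K n N GN (i + 1)) j)

/-- The quotient grading on `S/J`. -/
def quotGrade (J : Ideal (PS K n)) : ℤ → Submodule K (PS K n ⧸ J) := fun d =>
  (polyGrade K n d).map (Ideal.Quotient.mkₐ K J).toLinearMap

/-- The grading on an ideal `I ⊆ S` viewed as an `S`-module. -/
def idealGrade (I : Ideal (PS K n)) : ℤ → Submodule K ↥I := fun d =>
  (polyGrade K n d).comap ((Submodule.subtype I).restrictScalars K)

/-- `dim_K Tor_i^S(S/I, S/J)_j`. -/
def torQQ (I J : Ideal (PS K n)) (i : ℕ) (j : ℤ) : ℕ :=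
  torStrandDim K n (PS K n ⧸ J) (PS K n ⧸ I) (quotGrade K n I) (quotGrade K n J) i j

/-- `dim_K Tor_i^S(I, S/J)_j`. -/
def torIQ (I J : Ideal (PS K n)) (i : ℕ) (j : ℤ) : ℕ :=
  torStrandDim K n (PS K n ⧸ J) ↥I (idealGrade K n I) (quotGrade K n J) i j

/-- `a <_lex b` for the lexicographic order induced by `x_1 > x_2 > ⋯ > x_n`. -/
def lexLt (a b : Fin n →₀ ℕ) : Prop := Finsupp.Lex (· < ·) (· < ·) a b

/-- `a <_oplex b` for the (opposite) lexicographic order induced by `x_n > ⋯ > x_1`. -/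
def oplexLt (a b : Fin n →₀ ℕ) : Prop := Finsupp.Lex (· > ·) (· < ·) a b

/-- The total degree of an exponent vector. -/
def expDeg (m : Fin n →₀ ℕ) : ℕ := ∑ i, m i

/-- A monomial ideal: together with any polynomial it contains each of its monomials. -/
def IsMonomialIdeal (I : Ideal (PS K n)) : Prop :=
  ∀ f ∈ I, ∀ m ∈ f.support, MvPolynomial.monomial m (1 : K) ∈ I

/-- A lex ideal: a monomial ideal whose monomials form a lex set. -/
def IsLexIdeal (I : Ideal (PS K n)) : Prop :=
  IsMonomialIdeal K n I ∧ ∀ u v : Fin n →₀ ℕ, expDeg n u = expDeg n v →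
    MvPolynomial.monomial u (1 : K) ∈ I → lexLt n u v →
      MvPolynomial.monomial v (1 : K) ∈ I

/-- An opposite lex ideal: a monomial ideal whose monomials form an opposite lex set. -/
def IsOplexIdeal (I : Ideal (PS K n)) : Prop :=
  IsMonomialIdeal K n I ∧ ∀ u v : Fin n →₀ ℕ, expDeg n u = expDeg n v →
    MvPolynomial.monomial u (1 : K) ∈ I → oplexLt n u v →
      MvPolynomial.monomial v (1 : K) ∈ I

/-- The initial ideal `in_r(I)` of `I` with respect to a (strict) monomial order `r`:
the ideal generated by the `r`-maximal monomials of the nonzero elements of `I`. -/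
def initialIdealO (r : (Fin n →₀ ℕ) → (Fin n →₀ ℕ) → Prop) (I : Ideal (PS K n)) :
    Ideal (PS K n) :=
  Ideal.span {g | ∃ f ∈ I, ∃ m ∈ f.support,
    (∀ m' ∈ f.support, m' = m ∨ r m' m) ∧ g = MvPolynomial.monomial m (1 : K)}

/-!
Computed from the bar complex, `Tor_i(S/I, S/J)_j` has dimension equal to that of a strand
of the complex minus the ranks of the two adjacent differentials. The dimensions of the strands
depend only on the Hilbert functions of `S/I` and `S/J`, so they are unchanged by changes of
coordinates and by passing to initial ideals; it remains to compare ranks. Ranks can only drop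
under specialization. If `w` is a weight vector that represents the monomial order up to degree
`j`, the one-parameter subgroup `t ↦ diag(t ^ w)` degenerates `S/I` to `S/in(I)` along a family
which, on the basis of standard monomials, is polynomial in `t`. Degenerating `I` and `J`
simultaneously, with different weights, yields one pair of coordinate changes, hence one relative
change of coordinates, for which the ranks are at least those of the initial ideals. Semicontinuity
on `GL_n` spreads this to a general change of coordinates. As `Tor_i(S/I, S/J)_j = 0` for `i > j`,
only finitely many `i` impose a condition.
-/

/-! ### Graded vector spaces -/

section Grading

variable {K : Type} [Field K]
variable {V W U : Type} [AddCommGroup V] [Module K V] [AddCommGroup W] [Module K W]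
  [AddCommGroup U] [Module K U]

/-- A grading of a vector space by finite-dimensional subspaces that vanish in negative degrees.
Directness of the sum is encoded by the existence of projections onto the components. -/
structure IsFiniteGrading (G : ℤ → Submodule K V) : Prop where
  eq_bot_of_neg : ∀ d < 0, G d = ⊥
  finiteDimensional : ∀ d, FiniteDimensional K (G d)
  iSup_eq_top : ⨆ d, G d = ⊤
  exists_proj : ∃ p : ℤ → V →ₗ[K] V, (∀ d, ∀ x ∈ G d, p d x = x) ∧
    ∀ d e, d ≠ e → ∀ x ∈ G e, p d x = 0

theorem mem_of_forall_le_of_iSup_eq_top {G : ℤ → Submodule K V} (hG : ⨆ d, G d = ⊤)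
    {Q : Submodule K V} (hQ : ∀ d, G d ≤ Q) (x : V) : x ∈ Q :=
  (hG ▸ iSup_le hQ : ⊤ ≤ Q) trivial

theorem range_inf_eq_map {GV : ℤ → Submodule K V} {GW : ℤ → Submodule K W}
    (hV : IsFiniteGrading GV) (hW : IsFiniteGrading GW) (f : V →ₗ[K] W)
    (hf : ∀ d, ∀ x ∈ GV d, f x ∈ GW d) (j : ℤ) :
    LinearMap.range f ⊓ GW j = (GV j).map f := by
  obtain ⟨p, hp, hp_ne⟩ := hV.exists_proj
  obtain ⟨q, hq, hq_ne⟩ := hW.exists_proj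
  have hp_mem : ∀ x, p j x ∈ GV j :=
    mem_of_forall_le_of_iSup_eq_top hV.iSup_eq_top (Q := (GV j).comap (p j)) fun d x hx => by
      rcases eq_or_ne j d with rfl | h
      · simpa [hp _ x hx] using hx
      · simp [hp_ne j d h x hx]
  have hqp : ∀ x, q j (f x) = f (p j x) :=
    mem_of_forall_le_of_iSup_eq_top hV.iSup_eq_top (Q := LinearMap.eqLocus (q j ∘ₗ f) (f ∘ₗ p j))
      fun d x hx => by
        rcases eq_or_ne j d with rfl | h
        · simp [hp _ x hx, hq _ _ (hf _ x hx)]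
        · simp [hp_ne j d h x hx, hq_ne _ _ h _ (hf _ x hx)]
  apply le_antisymm
  · rintro _ ⟨⟨x, rfl⟩, hx⟩
    exact ⟨p j x, hp_mem x, by rw [← hqp, hq _ _ hx]⟩
  · rintro _ ⟨x, hx, rfl⟩
    exact ⟨⟨x, rfl⟩, hf _ x hx⟩

theorem finrank_ker_inf (f : V →ₗ[K] W) (G : Submodule K V) [FiniteDimensional K G] :
    Module.finrank K ↥(LinearMap.ker f ⊓ G) =
      Module.finrank K G - Module.finrank K (G.map f) := by
  have rank_nullity := LinearMap.finrank_range_add_finrank_ker (f.domRestrict G)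
  have ker_eq : LinearMap.ker f ⊓ G = (LinearMap.ker (f.domRestrict G)).map G.subtype := by
    rw [LinearMap.ker_domRestrict, Submodule.map_comap_subtype, inf_comm]
  rw [LinearMap.range_domRestrict] at rank_nullity
  rw [ker_eq, Submodule.finrank_map_subtype_eq]
  omega

theorem tmul_mem_tensorGrade {GV : ℤ → Submodule K V} {GW : ℤ → Submodule K W} {p q d : ℤ}
    {v : V} {w : W} (hv : v ∈ GV p) (hw : w ∈ GW q) (h : p + q = d) :
    v ⊗ₜ[K] w ∈ tensorGrade K GV GW d := by
  obtain rfl : q = d - p := by omega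
  exact Submodule.mem_iSup_of_mem p ⟨(⟨v, hv⟩ : GV p) ⊗ₜ (⟨w, hw⟩ : GW (d - p)), by simp⟩

theorem tensorGrade_le {GV : ℤ → Submodule K V} {GW : ℤ → Submodule K W} {d : ℤ}
    {Q : Submodule K (V ⊗[K] W)}
    (h : ∀ p, ∀ v ∈ GV p, ∀ w ∈ GW (d - p), v ⊗ₜ w ∈ Q) : tensorGrade K GV GW d ≤ Q := by
  refine iSup_le fun p => ?_
  rw [TensorProduct.range_map_eq_span_tmul, Submodule.span_le]
  rintro _ ⟨v, w, rfl⟩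
  exact h p v v.2 w w.2

theorem map_mem_of_mem_tensorGrade {GV : ℤ → Submodule K V} {GW : ℤ → Submodule K W} {d : ℤ}
    {f : V ⊗[K] W →ₗ[K] U} {Q : Submodule K U}
    (h : ∀ p, ∀ v ∈ GV p, ∀ w ∈ GW (d - p), f (v ⊗ₜ w) ∈ Q) :
    ∀ x ∈ tensorGrade K GV GW d, f x ∈ Q :=
  tensorGrade_le (Q := Q.comap f) h

theorem map_eq_of_mem_tensorGrade {GV : ℤ → Submodule K V} {GW : ℤ → Submodule K W} {d : ℤ}
    {f g : V ⊗[K] W →ₗ[K] U}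
    (h : ∀ p, ∀ v ∈ GV p, ∀ w ∈ GW (d - p), f (v ⊗ₜ w) = g (v ⊗ₜ w)) :
    ∀ x ∈ tensorGrade K GV GW d, f x = g x :=
  tensorGrade_le (Q := LinearMap.eqLocus f g) h

theorem tmul_eq_zero_of_notMem_Icc {GV : ℤ → Submodule K V} {GW : ℤ → Submodule K W}
    (hV : ∀ d < 0, GV d = ⊥) (hW : ∀ d < 0, GW d = ⊥) {d p : ℤ} (hp : p ∉ Finset.Icc 0 d)
    {v : V} (hv : v ∈ GV p) {w : W} (hw : w ∈ GW (d - p)) : v ⊗ₜ[K] w = 0 := by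
  rw [Finset.mem_Icc, not_and_or] at hp
  rcases hp with hp | hp
  · rw [hV p (by omega), Submodule.mem_bot] at hv
    rw [hv, zero_tmul]
  · rw [hW (d - p) (by omega), Submodule.mem_bot] at hw
    rw [hw, tmul_zero]

theorem tensorGrade_eq_bot_of_neg {GV : ℤ → Submodule K V} {GW : ℤ → Submodule K W}
    (hV : ∀ d < 0, GV d = ⊥) (hW : ∀ d < 0, GW d = ⊥) {d : ℤ} (hd : d < 0) :
    tensorGrade K GV GW d = ⊥ :=
  eq_bot_iff.2 <| tensorGrade_le fun _ _ hv _ hw =>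
    (Submodule.mem_bot K).2 <| tmul_eq_zero_of_notMem_Icc hV hW
      (by rw [Finset.Icc_eq_empty (by omega)]; exact Finset.notMem_empty _) hv hw

theorem finiteDimensional_tensorGrade {GV : ℤ → Submodule K V} {GW : ℤ → Submodule K W}
    (hV : IsFiniteGrading GV) (hW : IsFiniteGrading GW) (d : ℤ) :
    FiniteDimensional K (tensorGrade K GV GW d) := by
  have := hV.finiteDimensional
  have := hW.finiteDimensional
  refine Submodule.finiteDimensional_of_le (S₂ := ⨆ p : Finset.Icc 0 d,
    LinearMap.range (TensorProduct.map (GV p).subtype (GW (d - p)).subtype)) ?_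
  refine tensorGrade_le fun p v hv w hw => ?_
  by_cases hp : p ∈ Finset.Icc 0 d
  · exact Submodule.mem_iSup_of_mem ⟨p, hp⟩
      ⟨(⟨v, hv⟩ : GV p) ⊗ₜ (⟨w, hw⟩ : GW (d - p)), by simp⟩
  · rw [tmul_eq_zero_of_notMem_Icc hV.eq_bot_of_neg hW.eq_bot_of_neg hp hv hw]
    exact Submodule.zero_mem _

theorem iSup_tensorGrade {GV : ℤ → Submodule K V} {GW : ℤ → Submodule K W}
    (hV : ⨆ d, GV d = ⊤) (hW : ⨆ d, GW d = ⊤) : ⨆ d, tensorGrade K GV GW d = ⊤ := by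
  rw [eq_top_iff, ← TensorProduct.span_tmul_eq_top, Submodule.span_le]
  rintro _ ⟨v, w, rfl⟩
  refine mem_of_forall_le_of_iSup_eq_top hV
    (Q := (⨆ d, tensorGrade K GV GW d).comap ((TensorProduct.mk K V W).flip w)) ?_ v
  intro p v hv
  refine mem_of_forall_le_of_iSup_eq_top hW
    (Q := (⨆ d, tensorGrade K GV GW d).comap (TensorProduct.mk K V W v)) ?_ w
  intro q w hw
  exact Submodule.mem_iSup_of_mem (p + q) (tmul_mem_tensorGrade hv hw rfl)

theorem exists_proj_tensorGrade {GV : ℤ → Submodule K V} {GW : ℤ → Submodule K W}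
    (hV : IsFiniteGrading GV) (hW : IsFiniteGrading GW) :
    ∃ π : ℤ → V ⊗[K] W →ₗ[K] V ⊗[K] W, (∀ d, ∀ x ∈ tensorGrade K GV GW d, π d x = x) ∧
      ∀ d e, d ≠ e → ∀ x ∈ tensorGrade K GV GW e, π d x = 0 := by
  obtain ⟨p, hp, hp_ne⟩ := hV.exists_proj
  obtain ⟨q, hq, hq_ne⟩ := hW.exists_proj
  refine ⟨fun d => ∑ e ∈ Finset.Icc 0 d, TensorProduct.map (p e) (q (d - e)), fun d => ?_,
    fun d d' hd => ?_⟩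
  · refine map_eq_of_mem_tensorGrade (g := LinearMap.id) fun e v hv w hw => ?_
    by_cases he : e ∈ Finset.Icc 0 d
    · rw [LinearMap.sum_apply, Finset.sum_eq_single_of_mem e he fun f _ hf => by
        simp [hp_ne f e hf v hv]]
      simp [hp e v hv, hq _ w hw]
    · simp [tmul_eq_zero_of_notMem_Icc hV.eq_bot_of_neg hW.eq_bot_of_neg he hv hw]
  · refine map_eq_of_mem_tensorGrade (g := 0) fun e v hv w hw => ?_
    rw [LinearMap.sum_apply, LinearMap.zero_apply]
    refine Finset.sum_eq_zero fun f _ => ?_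
    rcases eq_or_ne f e with rfl | hf
    · simp [hq_ne (d - f) (d' - f) (by omega) w hw]
    · simp [hp_ne f e hf v hv]

theorem IsFiniteGrading.tensorGrade {GV : ℤ → Submodule K V} {GW : ℤ → Submodule K W}
    (hV : IsFiniteGrading GV) (hW : IsFiniteGrading GW) :
    IsFiniteGrading (tensorGrade K GV GW) where
  eq_bot_of_neg _ := tensorGrade_eq_bot_of_neg hV.eq_bot_of_neg hW.eq_bot_of_neg
  finiteDimensional := finiteDimensional_tensorGrade hV hW
  iSup_eq_top := iSup_tensorGrade hV.iSup_eq_top hW.iSup_eq_top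
  exists_proj := exists_proj_tensorGrade hV hW

/-- A linear equivalence that identifies two gradings degree by degree. -/
def IsGradedEquiv (GV : ℤ → Submodule K V) (GW : ℤ → Submodule K W) (φ : V ≃ₗ[K] W) : Prop :=
  ∀ d, (GV d).map φ.toLinearMap = GW d

variable {V' W' : Type} [AddCommGroup V'] [Module K V'] [AddCommGroup W'] [Module K W']

theorem IsGradedEquiv.refl (G : ℤ → Submodule K V) : IsGradedEquiv G G (LinearEquiv.refl K V) :=
  fun d => Submodule.map_id (G d)

theorem IsGradedEquiv.symm {GV : ℤ → Submodule K V} {GW : ℤ → Submodule K W} {φ : V ≃ₗ[K] W}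
    (h : IsGradedEquiv GV GW φ) : IsGradedEquiv GW GV φ.symm := fun d => by
  rw [← h d, ← Submodule.map_comp, LinearEquiv.comp_coe, LinearEquiv.self_trans_symm]
  exact Submodule.map_id (GV d)

theorem IsFiniteGrading.congr {GV : ℤ → Submodule K V} {GW : ℤ → Submodule K W} {φ : V ≃ₗ[K] W}
    (hV : IsFiniteGrading GV) (h : IsGradedEquiv GV GW φ) : IsFiniteGrading GW where
  eq_bot_of_neg d hd := by rw [← h d, hV.eq_bot_of_neg d hd, Submodule.map_bot]
  finiteDimensional d := by
    have := hV.finiteDimensional d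
    rw [← h d]
    infer_instance
  iSup_eq_top := by
    simp only [← h _, ← Submodule.map_iSup, hV.iSup_eq_top]
    rw [Submodule.map_top, LinearEquiv.range]
  exists_proj := by
    obtain ⟨p, hp, hp0⟩ := hV.exists_proj
    refine ⟨fun d => φ.toLinearMap ∘ₗ p d ∘ₗ φ.symm.toLinearMap, fun d w hw => ?_,
      fun d e hde w hw => ?_⟩
    · obtain ⟨v, hv, rfl⟩ := (h d).ge hw
      simp [hp d v hv]
    · obtain ⟨v, hv, rfl⟩ := (h e).ge hw
      simp [hp0 d e hde v hv]

theorem isGradedEquiv_of_forall_mem {GV : ℤ → Submodule K V} {GW : ℤ → Submodule K W}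
    {φ : V ≃ₗ[K] W} (h : ∀ d, ∀ v ∈ GV d, φ v ∈ GW d) (h' : ∀ d, ∀ w ∈ GW d, φ.symm w ∈ GV d) :
    IsGradedEquiv GV GW φ := fun d =>
  le_antisymm (Submodule.map_le_iff_le_comap.2 (h d))
    fun w hw => ⟨φ.symm w, h' d w hw, φ.apply_symm_apply w⟩

theorem IsGradedEquiv.tensorGrade {GV : ℤ → Submodule K V} {GV' : ℤ → Submodule K V'}
    {GW : ℤ → Submodule K W} {GW' : ℤ → Submodule K W'} {φ : V ≃ₗ[K] V'} {ψ : W ≃ₗ[K] W'}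
    (hφ : IsGradedEquiv GV GV' φ) (hψ : IsGradedEquiv GW GW' ψ) :
    IsGradedEquiv (tensorGrade K GV GW) (tensorGrade K GV' GW') (TensorProduct.congr φ ψ) := by
  intro d
  apply le_antisymm
  · rw [Submodule.map_le_iff_le_comap]
    refine tensorGrade_le fun p v hv w hw => ?_
    refine tmul_mem_tensorGrade (p := p) (q := d - p) ?_ ?_ (by ring)
    · exact hφ p ▸ Submodule.mem_map_of_mem hv
    · exact hψ (d - p) ▸ Submodule.mem_map_of_mem hw
  · refine tensorGrade_le fun p v' hv' w' hw' => ?_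
    rw [← hφ] at hv'
    rw [← hψ] at hw'
    obtain ⟨v, hv, rfl⟩ := hv'
    obtain ⟨w, hw, rfl⟩ := hw'
    exact ⟨v ⊗ₜ w, tmul_mem_tensorGrade hv hw (by ring), by simp⟩

end Grading

section PolyGrade

variable {K : Type} [Field K] {n : ℕ}

theorem polyGrade_natCast (d : ℕ) : polyGrade K n d = homogeneousSubmodule (Fin n) K d := by
  simp [polyGrade]

theorem polyGrade_of_neg {d : ℤ} (hd : d < 0) : polyGrade K n d = ⊥ :=
  if_neg hd.not_ge

theorem mul_mem_polyGrade {d e : ℤ} {f g : PS K n} (hf : f ∈ polyGrade K n d)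
    (hg : g ∈ polyGrade K n e) : f * g ∈ polyGrade K n (d + e) := by
  rcases lt_or_ge d 0 with hd | hd
  · rw [polyGrade_of_neg hd, Submodule.mem_bot] at hf
    simp [hf]
  rcases lt_or_ge e 0 with he | he
  · rw [polyGrade_of_neg he, Submodule.mem_bot] at hg
    simp [hg]
  lift d to ℕ using hd
  lift e to ℕ using he
  rw [polyGrade_natCast] at hf hg
  rw [← Nat.cast_add, polyGrade_natCast]
  exact IsHomogeneous.mul hf hg

/-- The projection of the polynomial ring onto its component of a given integer degree. -/
def polyProj (d : ℤ) : PS K n →ₗ[K] PS K n := if 0 ≤ d then homogeneousComponent d.toNat else 0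

theorem polyProj_natCast (d : ℕ) :
    polyProj (d : ℤ) = (homogeneousComponent d : PS K n →ₗ[K] PS K n) := by
  simp [polyProj]

theorem polyProj_of_neg {d : ℤ} (hd : d < 0) : polyProj d = (0 : PS K n →ₗ[K] PS K n) :=
  if_neg hd.not_ge

theorem polyProj_apply_of_mem {d e : ℤ} {f : PS K n} (hf : f ∈ polyGrade K n e) :
    polyProj d f = if d = e then f else 0 := by
  rcases lt_or_ge e 0 with he | he
  · rw [polyGrade_of_neg he, Submodule.mem_bot] at hf
    simp [hf]
  lift e to ℕ using he
  rcases lt_or_ge d 0 with hd | hd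
  · rw [polyProj_of_neg hd, if_neg (by omega), LinearMap.zero_apply]
  lift d to ℕ using hd
  rw [polyGrade_natCast] at hf
  rw [polyProj_natCast, homogeneousComponent_of_mem hf]
  simp

theorem polyProj_mem_polyGrade (d : ℤ) (f : PS K n) : polyProj d f ∈ polyGrade K n d := by
  rcases lt_or_ge d 0 with hd | hd
  · rw [polyProj_of_neg hd]
    exact zero_mem _
  · lift d to ℕ using hd
    rw [polyProj_natCast, polyGrade_natCast]
    exact homogeneousComponent_mem d f

theorem support_polyProj_subset (d : ℤ) (f : PS K n) : (polyProj d f).support ⊆ f.support := by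
  rcases lt_or_ge d 0 with hd | hd
  · simp [polyProj_of_neg hd]
  · lift d to ℕ using hd
    intro c
    rw [polyProj_natCast, mem_support_iff, mem_support_iff, coeff_homogeneousComponent]
    exact fun hc h0 => hc (by rw [h0, ite_self])

theorem isFiniteGrading_polyGrade : IsFiniteGrading (polyGrade K n) where
  eq_bot_of_neg _ := polyGrade_of_neg
  finiteDimensional d := by
    rcases lt_or_ge d 0 with hd | hd
    · rw [polyGrade_of_neg hd]
      infer_instance
    · lift d to ℕ using hd
      rw [polyGrade_natCast]
      exact Module.Finite.iff_fg.2 (homogeneousSubmodule_fg _ _ _)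
  iSup_eq_top := eq_top_iff.2 fun f _ => by
    rw [← sum_homogeneousComponent f]
    refine Submodule.sum_mem _ fun d _ => Submodule.mem_iSup_of_mem (d : ℤ) ?_
    rw [polyGrade_natCast]
    exact homogeneousComponent_mem d f
  exists_proj := ⟨polyProj, fun _ _ hf => by rw [polyProj_apply_of_mem hf, if_pos rfl],
    fun _ _ h _ hf => by rw [polyProj_apply_of_mem hf, if_neg h]⟩

end PolyGrade

/-! ### The bar complex of a pair of bilinear actions -/

section BarComplex

variable {K : Type} [Field K] {n : ℕ}
variable {V V' W W' B B' : Type} [AddCommGroup V] [Module K V] [AddCommGroup V'] [Module K V']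
  [AddCommGroup W] [Module K W] [AddCommGroup W'] [Module K W']
  [AddCommGroup B] [Module K B] [AddCommGroup B'] [Module K B']

/-- The map `v ⊗ s ⊗ t ↦ μ s v ⊗ t - v ⊗ c (s ⊗ t)`. Both the contractions and the differentials
of the bar complex have this shape; `μ` and `c` are arbitrary so that they may vary in families. -/
def barStep (μ : PS K n →ₗ[K] V →ₗ[K] V) (c : PS K n ⊗[K] B →ₗ[K] B) :
    V ⊗[K] (PS K n ⊗[K] B) →ₗ[K] V ⊗[K] B :=
  (TensorProduct.map (TensorProduct.lift μ.flip) LinearMap.id).comp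
      (TensorProduct.assoc K V (PS K n) B).symm.toLinearMap
  - TensorProduct.map LinearMap.id c

@[simp]
theorem barStep_tmul (μ : PS K n →ₗ[K] V →ₗ[K] V) (c : PS K n ⊗[K] B →ₗ[K] B)
    (v : V) (s : PS K n) (t : B) :
    barStep μ c (v ⊗ₜ (s ⊗ₜ t)) = (μ s v) ⊗ₜ t - v ⊗ₜ c (s ⊗ₜ t) := by
  simp [barStep]

/-- The contractions `barC` with the module structure replaced by an arbitrary bilinear map. -/
def barContraction (ν : PS K n →ₗ[K] W →ₗ[K] W) :
    (i : ℕ) → ((barD K n W (i + 1)) →ₗ[K] (barD K n W i))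
  | 0 => TensorProduct.lift ν
  | (i + 1) => barStep (B := barD K n W i) (LinearMap.mul K (PS K n)) (barContraction ν i)

/-- The differentials `barB` with the module structures replaced by arbitrary bilinear maps. -/
def barDifferential (μ : PS K n →ₗ[K] V →ₗ[K] V) (ν : PS K n →ₗ[K] W →ₗ[K] W) (i : ℕ) :
    (V ⊗[K] (barD K n W (i + 1))) →ₗ[K] (V ⊗[K] (barD K n W i)) :=
  barStep (B := barD K n W i) μ (barContraction ν i)

theorem barC_eq_barContraction [Module (PS K n) W] [IsScalarTower K (PS K n) W] (i : ℕ) :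
    barC K n W i = barContraction (smulBilin K n W) i := by
  induction i with
  | zero => rfl
  | succ i ih =>
    have lift_mul :
        TensorProduct.lift (LinearMap.mul K (PS K n)).flip = LinearMap.mul' K (PS K n) :=
      TensorProduct.ext' fun s t => by simp
    change _ = (TensorProduct.map (TensorProduct.lift (LinearMap.mul K (PS K n)).flip)
      LinearMap.id).comp _ - _
    rw [lift_mul, barC, ih]
    rfl

theorem barB_eq_barDifferential [Module (PS K n) V] [IsScalarTower K (PS K n) V]
    [Module (PS K n) W] [IsScalarTower K (PS K n) W] (i : ℕ) :
    barB K n W V i = barDifferential (smulBilin K n V) (smulBilin K n W) i := by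
  rw [barB, barC_eq_barContraction]
  rfl

/-- A bilinear map `S × V → V` that respects the gradings. -/
def IsGradedAction (G : ℤ → Submodule K V) (μ : PS K n →ₗ[K] V →ₗ[K] V) : Prop :=
  ∀ a p, ∀ s ∈ polyGrade K n a, ∀ v ∈ G p, μ s v ∈ G (p + a)

theorem isGradedAction_mul : IsGradedAction (polyGrade K n) (LinearMap.mul K (PS K n)) :=
  fun a p _ hs _ hf => add_comm a p ▸ mul_mem_polyGrade hs hf

theorem barStep_mem_tensorGrade {GV : ℤ → Submodule K V} {GB : ℤ → Submodule K B}
    {μ : PS K n →ₗ[K] V →ₗ[K] V} {c : PS K n ⊗[K] B →ₗ[K] B} (hμ : IsGradedAction GV μ)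
    (hc : ∀ d, ∀ x ∈ tensorGrade K (polyGrade K n) GB d, c x ∈ GB d) (d : ℤ) :
    ∀ x ∈ tensorGrade K GV (tensorGrade K (polyGrade K n) GB) d,
      barStep μ c x ∈ tensorGrade K GV GB d := by
  refine map_mem_of_mem_tensorGrade fun p v hv => ?_
  refine map_mem_of_mem_tensorGrade (f := barStep μ c ∘ₗ TensorProduct.mk K _ _ v)
    fun a s hs t ht => ?_
  rw [LinearMap.comp_apply, TensorProduct.mk_apply, barStep_tmul]
  exact Submodule.sub_mem _ (tmul_mem_tensorGrade (hμ a p s hs v hv) ht (by ring))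
    (tmul_mem_tensorGrade hv (hc _ _ (tmul_mem_tensorGrade hs ht rfl)) (by ring))

theorem barContraction_mem_barDGrade {GW : ℤ → Submodule K W} {ν : PS K n →ₗ[K] W →ₗ[K] W}
    (hν : IsGradedAction GW ν) (i : ℕ) :
    ∀ d, ∀ x ∈ barDGrade K n W GW (i + 1) d, barContraction ν i x ∈ barDGrade K n W GW i d := by
  induction i with
  | zero =>
    exact fun d => map_mem_of_mem_tensorGrade (f := TensorProduct.lift ν) (Q := GW d)
      fun p s hs w hw => by simpa using hν p (d - p) s hs w hw
  | succ i ih => exact barStep_mem_tensorGrade isGradedAction_mul ih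

theorem barDifferential_mem_tensorGrade {GV : ℤ → Submodule K V} {GW : ℤ → Submodule K W}
    {μ : PS K n →ₗ[K] V →ₗ[K] V} {ν : PS K n →ₗ[K] W →ₗ[K] W} (hμ : IsGradedAction GV μ)
    (hν : IsGradedAction GW ν) (i : ℕ) :
    ∀ d, ∀ x ∈ tensorGrade K GV (barDGrade K n W GW (i + 1)) d,
      barDifferential μ ν i x ∈ tensorGrade K GV (barDGrade K n W GW i) d :=
  barStep_mem_tensorGrade hμ (barContraction_mem_barDGrade hν i)

theorem isFiniteGrading_barDGrade {GW : ℤ → Submodule K W} (hW : IsFiniteGrading GW) (i : ℕ) :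
    IsFiniteGrading (barDGrade K n W GW i) := by
  induction i with
  | zero => exact hW
  | succ i ih => exact isFiniteGrading_polyGrade.tensorGrade ih

/-- The dimension of the degree `j` component of the `i`-th term of the bar complex. -/
def strandDim (n : ℕ) (GV : ℤ → Submodule K V) (GW : ℤ → Submodule K W) (i : ℕ) (j : ℤ) : ℕ :=
  Module.finrank K (tensorGrade K GV (barDGrade K n W GW i) j)

/-- The rank of the `i`-th differential of the bar complex in degree `j`. -/
def strandRank (GV : ℤ → Submodule K V) (GW : ℤ → Submodule K W) (μ : PS K n →ₗ[K] V →ₗ[K] V)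
    (ν : PS K n →ₗ[K] W →ₗ[K] W) (i : ℕ) (j : ℤ) : ℕ :=
  Module.finrank K ((tensorGrade K GV (barDGrade K n W GW (i + 1)) j).map (barDifferential μ ν i))

theorem map_barStep {φ : V →ₗ[K] V'} {α : PS K n →ₗ[K] PS K n} {ψ : B →ₗ[K] B'}
    {μ : PS K n →ₗ[K] V →ₗ[K] V} {μ' : PS K n →ₗ[K] V' →ₗ[K] V'}
    {c : PS K n ⊗[K] B →ₗ[K] B} {c' : PS K n ⊗[K] B' →ₗ[K] B'}
    (hμ : ∀ s v, φ (μ s v) = μ' (α s) (φ v))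
    (hc : ∀ x, ψ (c x) = c' (TensorProduct.map α ψ x)) (x : V ⊗[K] (PS K n ⊗[K] B)) :
    TensorProduct.map φ ψ (barStep μ c x) =
      barStep μ' c' (TensorProduct.map φ (TensorProduct.map α ψ) x) := by
  induction x using TensorProduct.induction_on with
  | zero => simp only [map_zero]
  | add x y hx hy => simp only [map_add, hx, hy]
  | tmul v y =>
    induction y using TensorProduct.induction_on with
    | zero => simp only [tmul_zero, map_zero]
    | add x y hx hy => simp only [map_add, tmul_add, hx, hy]
    | tmul s t => simp [hμ, hc]

/-- The equivalence of the terms `S^{⊗ i} ⊗ W` induced by `α` on `S` and `ψ` on `W`. -/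
def barDCongr (α : PS K n ≃ₗ[K] PS K n) (ψ : W ≃ₗ[K] W') :
    (i : ℕ) → (barD K n W i ≃ₗ[K] barD K n W' i)
  | 0 => ψ
  | (i + 1) => TensorProduct.congr α (barDCongr α ψ i)

theorem isGradedEquiv_barDCongr {α : PS K n ≃ₗ[K] PS K n} {ψ : W ≃ₗ[K] W'}
    {GW : ℤ → Submodule K W} {GW' : ℤ → Submodule K W'}
    (hα : IsGradedEquiv (polyGrade K n) (polyGrade K n) α) (hψ : IsGradedEquiv GW GW' ψ) (i : ℕ) :
    IsGradedEquiv (barDGrade K n W GW i) (barDGrade K n W' GW' i) (barDCongr α ψ i) := by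
  induction i with
  | zero => exact hψ
  | succ i ih => exact hα.tensorGrade ih

theorem barDCongr_barContraction {α : PS K n ≃ₐ[K] PS K n} {ψ : W ≃ₗ[K] W'}
    {ν : PS K n →ₗ[K] W →ₗ[K] W} {ν' : PS K n →ₗ[K] W' →ₗ[K] W'}
    (hν : ∀ s w, ψ (ν s w) = ν' (α s) (ψ w)) (i : ℕ) (x : barD K n W (i + 1)) :
    barDCongr α.toLinearEquiv ψ i (barContraction ν i x) =
      barContraction ν' i (barDCongr α.toLinearEquiv ψ (i + 1) x) := by
  induction i with
  | zero =>
    have := TensorProduct.ext' (g := ψ.toLinearMap ∘ₗ TensorProduct.lift ν)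
      (h := TensorProduct.lift ν' ∘ₗ (TensorProduct.congr α.toLinearEquiv ψ).toLinearMap)
      fun s w => by simp [hν]
    exact LinearMap.congr_fun this x
  | succ i ih =>
    exact map_barStep (φ := α.toLinearMap) (α := α.toLinearMap)
      (ψ := (barDCongr α.toLinearEquiv ψ i).toLinearMap) (map_mul α) ih x

theorem strandRank_congr {GV : ℤ → Submodule K V} {GV' : ℤ → Submodule K V'} {φ : V ≃ₗ[K] V'}
    {GW : ℤ → Submodule K W} {GW' : ℤ → Submodule K W'} {ψ : W ≃ₗ[K] W'}
    {α : PS K n ≃ₐ[K] PS K n} {μ : PS K n →ₗ[K] V →ₗ[K] V} {μ' : PS K n →ₗ[K] V' →ₗ[K] V'}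
    {ν : PS K n →ₗ[K] W →ₗ[K] W} {ν' : PS K n →ₗ[K] W' →ₗ[K] W'}
    (hα : IsGradedEquiv (polyGrade K n) (polyGrade K n) α.toLinearEquiv)
    (hφ : IsGradedEquiv GV GV' φ) (hψ : IsGradedEquiv GW GW' ψ)
    (hμ : ∀ s v, φ (μ s v) = μ' (α s) (φ v)) (hν : ∀ s w, ψ (ν s w) = ν' (α s) (ψ w))
    (i : ℕ) (j : ℤ) :
    strandRank GV GW μ ν i j = strandRank GV' GW' μ' ν' i j := by
  let Ψ := barDCongr α.toLinearEquiv ψ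
  have hcomm : (barDifferential μ' ν' i).comp (TensorProduct.congr φ (Ψ (i + 1))).toLinearMap =
      (TensorProduct.congr φ (Ψ i)).toLinearMap.comp (barDifferential μ ν i) :=
    LinearMap.ext fun x => (map_barStep (φ := φ.toLinearMap) (α := α.toLinearMap)
      (ψ := (Ψ i).toLinearMap) hμ (barDCongr_barContraction hν i) x).symm
  rw [strandRank, strandRank, ← hφ.tensorGrade (isGradedEquiv_barDCongr hα hψ (i + 1)) j,
    ← Submodule.map_comp, hcomm, Submodule.map_comp]
  exact (LinearEquiv.finrank_map_eq _ _).symm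

theorem strandDim_congr {GV : ℤ → Submodule K V} {GV' : ℤ → Submodule K V'} {φ : V ≃ₗ[K] V'}
    {GW : ℤ → Submodule K W} {GW' : ℤ → Submodule K W'} {ψ : W ≃ₗ[K] W'}
    (hφ : IsGradedEquiv GV GV' φ) (hψ : IsGradedEquiv GW GW' ψ) (i : ℕ) (j : ℤ) :
    strandDim n GV GW i j = strandDim n GV' GW' i j := by
  rw [strandDim, strandDim,
    ← hφ.tensorGrade (isGradedEquiv_barDCongr (IsGradedEquiv.refl (polyGrade K n)) hψ i) j]
  exact (LinearEquiv.finrank_map_eq _ _).symm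

end BarComplex

/-! ### Exactness of the bar complex in low degrees -/

section Homotopy

variable {K : Type} [Field K] {n : ℕ}
variable {V W B : Type} [AddCommGroup V] [Module K V] [AddCommGroup W] [Module K W]
  [AddCommGroup B] [Module K B]

/-- The projection of the polynomial ring onto the constants. -/
def constantTerm : PS K n →ₗ[K] PS K n :=
  Algebra.linearMap K (PS K n) ∘ₗ lcoeff K 0

theorem constantTerm_eq_zero_iff {u : PS K n} : constantTerm u = 0 ↔ constantCoeff u = 0 := by
  simp [constantTerm, constantCoeff_eq]

theorem constantTerm_one : constantTerm (1 : PS K n) = 1 := by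
  simp [constantTerm]

theorem constantCoeff_eq_zero_of_mem_polyGrade {d : ℤ} (hd : d ≠ 0) {f : PS K n}
    (hf : f ∈ polyGrade K n d) : constantCoeff f = 0 := by
  rcases lt_or_ge d 0 with hd' | hd'
  · rw [polyGrade_of_neg hd', Submodule.mem_bot] at hf
    rw [hf, map_zero]
  · lift d to ℕ using hd'
    rw [polyGrade_natCast, mem_homogeneousSubmodule] at hf
    exact hf.coeff_eq_zero (by simpa using (Nat.cast_ne_zero.1 hd).symm)

theorem tensorGrade_polyGrade_le {GB : ℤ → Submodule K B} {d : ℤ}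
    {Q : Submodule K (PS K n ⊗[K] B)} (h_one : ∀ t, (1 : PS K n) ⊗ₜ t ∈ Q)
    (h_pos : ∀ u : PS K n, constantCoeff u = 0 → ∀ e < d, ∀ t ∈ GB e, u ⊗ₜ t ∈ Q) :
    tensorGrade K (polyGrade K n) GB d ≤ Q := by
  refine tensorGrade_le fun p s hs t ht => ?_
  rcases lt_trichotomy p 0 with hp | rfl | hp
  · rw [polyGrade_of_neg hp, Submodule.mem_bot] at hs
    simp [hs]
  · rw [← Nat.cast_zero, polyGrade_natCast, mem_homogeneousSubmodule,
      ← totalDegree_zero_iff_isHomogeneous, totalDegree_eq_zero_iff_eq_C] at hs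
    rw [hs, ← mul_one (C _), ← smul_eq_C_mul, ← smul_tmul']
    exact Q.smul_mem _ (h_one t)
  · exact h_pos s (constantCoeff_eq_zero_of_mem_polyGrade hp.ne' hs) _ (by omega) t ht

/-- The recursion step of the contracting homotopy of the bar complex:
`1 ⊗ t ↦ 1 ⊗ 1 ⊗ t`, and `u ⊗ t ↦ - u ⊗ H t` if `u` has no constant term. -/
def homotopyStep (H : B →ₗ[K] PS K n ⊗[K] B) : PS K n ⊗[K] B →ₗ[K] PS K n ⊗[K] (PS K n ⊗[K] B) :=
  (TensorProduct.mk K (PS K n) (PS K n ⊗[K] B) 1).comp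
    (TensorProduct.map constantTerm LinearMap.id)
  - TensorProduct.map (LinearMap.id - constantTerm) H

theorem homotopyStep_one_tmul (H : B →ₗ[K] PS K n ⊗[K] B) (t : B) :
    homotopyStep H (1 ⊗ₜ t) = 1 ⊗ₜ (1 ⊗ₜ t) := by
  simp [homotopyStep, constantTerm_one]

theorem homotopyStep_tmul (H : B →ₗ[K] PS K n ⊗[K] B) {u : PS K n} (hu : constantCoeff u = 0)
    (t : B) : homotopyStep H (u ⊗ₜ t) = - u ⊗ₜ H t := by
  simp [homotopyStep, constantTerm_eq_zero_iff.2 hu]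

/-- `H` is a contracting homotopy for the contraction `c` in degrees below `i`. The second identity
involves the next contraction, which is `barStep (LinearMap.mul K (PS K n)) c`. -/
structure IsContractingBelow (GB : ℤ → Submodule K B) (H : B →ₗ[K] PS K n ⊗[K] B)
    (c : PS K n ⊗[K] B →ₗ[K] B) (i : ℤ) : Prop where
  one_tmul : ∀ t, H t + 1 ⊗ₜ c (1 ⊗ₜ t) - H (c (1 ⊗ₜ t)) = 1 ⊗ₜ t
  tmul : ∀ u : PS K n, constantCoeff u = 0 → ∀ d < i, ∀ t ∈ GB d,
    barStep (LinearMap.mul K (PS K n)) c (u ⊗ₜ H t) - H (c (u ⊗ₜ t)) = u ⊗ₜ t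

theorem IsContractingBelow.homotopyStep {GB : ℤ → Submodule K B} {H : B →ₗ[K] PS K n ⊗[K] B}
    {c : PS K n ⊗[K] B →ₗ[K] B} {i : ℤ} (h : IsContractingBelow GB H c i) :
    IsContractingBelow (tensorGrade K (polyGrade K n) GB) (homotopyStep H)
      (barStep (LinearMap.mul K (PS K n)) c) (i + 1) where
  one_tmul x := by
    have barStep_one_tmul : barStep (LinearMap.mul K (PS K n)) c (1 ⊗ₜ x) = x - 1 ⊗ₜ c x := by
      induction x using TensorProduct.induction_on with
      | zero => simp
      | add x y hx hy => simp only [tmul_add, map_add, hx, hy]; abel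
      | tmul s t => simp
    rw [barStep_one_tmul, map_sub, homotopyStep_one_tmul, tmul_sub]
    abel
  tmul u hu d hd := by
    let c₁ := barStep (LinearMap.mul K (PS K n)) c
    refine tensorGrade_polyGrade_le (Q := LinearMap.eqLocus
      (barStep (LinearMap.mul K (PS K n)) c₁ ∘ₗ TensorProduct.mk K _ _ u ∘ₗ _root_.homotopyStep H -
        _root_.homotopyStep H ∘ₗ c₁ ∘ₗ TensorProduct.mk K _ _ u)
      (TensorProduct.mk K _ _ u)) (fun t => ?_) fun v hv e he t ht => ?_
    · have hone := congrArg (u ⊗ₜ[K] ·) (h.one_tmul t)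
      simp only [tmul_add, tmul_sub] at hone
      simp only [LinearMap.mem_eqLocus, LinearMap.sub_apply, LinearMap.comp_apply, c₁,
        TensorProduct.mk_apply, homotopyStep_one_tmul, barStep_tmul, LinearMap.mul_apply', map_sub,
        mul_one, one_mul, homotopyStep_tmul H hu, tmul_sub]
      rw [← hone]
      abel
    · have htmul := congrArg (u ⊗ₜ[K] ·) (h.tmul v hv e (by omega) t ht)
      simp only [tmul_sub] at htmul
      simp only [LinearMap.mem_eqLocus, LinearMap.sub_apply, LinearMap.comp_apply, c₁,
        TensorProduct.mk_apply, homotopyStep_tmul H hv, barStep_tmul, LinearMap.mul_apply',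
        map_sub, homotopyStep_tmul H hu, map_neg,
        homotopyStep_tmul H (show constantCoeff (v * u) = 0 by rw [map_mul, hu, mul_zero])]
      rw [← htmul]
      abel

/-- The contracting homotopy of the bar complex, defined by recursion on the tensor degree. -/
def barHomotopy (W : Type) [AddCommGroup W] [Module K W] :
    (i : ℕ) → (barD K n W i →ₗ[K] barD K n W (i + 1))
  | 0 => 0
  | (i + 1) => homotopyStep (B := barD K n W i) (barHomotopy W i)

theorem isContractingBelow_barHomotopy {GW : ℤ → Submodule K W} (hW : ∀ d < 0, GW d = ⊥)
    {ν : PS K n →ₗ[K] W →ₗ[K] W} (hν : ∀ w, ν 1 w = w) (i : ℕ) :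
    IsContractingBelow (B := barD K n W i) (barDGrade K n W GW i) (barHomotopy W i)
      (barContraction ν i) i := by
  induction i with
  | zero =>
    refine IsContractingBelow.mk (B := W) (H := 0) (c := TensorProduct.lift ν)
      (fun t => by simp [hν]) fun u _ d hd t ht => ?_
    obtain rfl : t = 0 := (Submodule.mem_bot K).1 (hW d hd ▸ ht)
    simp
  | succ i ih => exact Nat.cast_succ (R := ℤ) i ▸ ih.homotopyStep

theorem IsContractingBelow.barStep_add {GV : ℤ → Submodule K V} {GB : ℤ → Submodule K B}
    {H : B →ₗ[K] PS K n ⊗[K] B} {c : PS K n ⊗[K] B →ₗ[K] B} {i : ℤ}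
    (h : IsContractingBelow GB H c i) (hV : ∀ d < 0, GV d = ⊥) {μ : PS K n →ₗ[K] V →ₗ[K] V}
    (hμ : ∀ v, μ 1 v = v) {j : ℤ} (hj : j < i + 1) :
    ∀ x ∈ tensorGrade K GV (tensorGrade K (polyGrade K n) GB) j,
      barStep μ (barStep (LinearMap.mul K (PS K n)) c)
        (TensorProduct.map LinearMap.id (_root_.homotopyStep H) x) +
          TensorProduct.map LinearMap.id H (barStep μ c x) = x := by
  let c₁ := barStep (LinearMap.mul K (PS K n)) c
  refine map_eq_of_mem_tensorGrade (f := barStep μ c₁ ∘ₗ TensorProduct.map LinearMap.id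
    (_root_.homotopyStep H) + TensorProduct.map LinearMap.id H ∘ₗ barStep μ c) (g := LinearMap.id)
    fun p v hv => ?_
  rcases lt_or_ge p 0 with hp | hp
  · obtain rfl : v = 0 := (Submodule.mem_bot K).1 (hV p hp ▸ hv)
    simp
  refine tensorGrade_polyGrade_le (Q := LinearMap.eqLocus
    (barStep μ c₁ ∘ₗ TensorProduct.mk K _ _ v ∘ₗ _root_.homotopyStep H +
      TensorProduct.map LinearMap.id H ∘ₗ barStep μ c ∘ₗ TensorProduct.mk K _ _ v)
    (TensorProduct.mk K _ _ v)) (fun t => ?_) fun u hu e he t ht => ?_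
  · have hone := congrArg (v ⊗ₜ[K] ·) (h.one_tmul t)
    simp only [tmul_add, tmul_sub] at hone
    simp only [LinearMap.mem_eqLocus, LinearMap.add_apply, LinearMap.comp_apply, c₁,
      TensorProduct.mk_apply, homotopyStep_one_tmul, barStep_tmul, LinearMap.mul_apply', map_sub,
      mul_one, hμ, tmul_sub, TensorProduct.map_tmul, LinearMap.id_apply]
    rw [← hone]
    abel
  · have htmul := congrArg (v ⊗ₜ[K] ·) (h.tmul u hu e (by omega) t ht)
    simp only [tmul_sub] at htmul
    simp only [LinearMap.mem_eqLocus, LinearMap.add_apply, LinearMap.comp_apply, c₁,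
      TensorProduct.mk_apply, homotopyStep_tmul H hu, barStep_tmul, map_sub, map_neg,
      TensorProduct.map_tmul, LinearMap.id_apply]
    rw [← htmul]
    abel

theorem ker_barDifferential_inf_le_range {GV : ℤ → Submodule K V} {GW : ℤ → Submodule K W}
    (hV : ∀ d < 0, GV d = ⊥) (hW : ∀ d < 0, GW d = ⊥)
    {μ : PS K n →ₗ[K] V →ₗ[K] V} {ν : PS K n →ₗ[K] W →ₗ[K] W}
    (hμ : ∀ v, μ 1 v = v) (hν : ∀ w, ν 1 w = w) {i : ℕ} {j : ℤ} (hj : j < i + 1) :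
    LinearMap.ker (barDifferential μ ν i) ⊓ tensorGrade K GV (barDGrade K n W GW (i + 1)) j ≤
      LinearMap.range (barDifferential μ ν (i + 1)) := by
  rintro x ⟨hx, hxj⟩
  have homotopy := (isContractingBelow_barHomotopy hW hν i).barStep_add hV hμ hj x hxj
  rw [show barStep (B := barD K n W i) μ (barContraction ν i) x = 0 from hx, map_zero,
    add_zero] at homotopy
  exact ⟨_, homotopy⟩

end Homotopy

/-! ### Regular families and semicontinuity of the rank -/

section Families

variable {K : Type} [Field K] {n : ℕ} {X : Type}
variable {V W B : Type} [AddCommGroup V] [Module K V] [AddCommGroup W] [Module K W]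
  [AddCommGroup B] [Module K B]

/-- The functions on `X` with values in `V` whose coordinates belong to a given algebra `R` of
scalar functions: the image of `R ⊗ V` in `X → V`. -/
def regularMaps (R : Subalgebra K (X → K)) (V : Type) [AddCommGroup V] [Module K V] :
    Submodule R (X → V) :=
  Submodule.span R (Set.range fun (v : V) (_ : X) => v)

variable {R : Subalgebra K (X → K)}

theorem const_mem_regularMaps (v : V) : (fun _ => v) ∈ regularMaps R V :=
  Submodule.subset_span ⟨v, rfl⟩

theorem smul_mem_regularMaps {a : X → K} (ha : a ∈ R) {f : X → V} (hf : f ∈ regularMaps R V) :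
    (fun x => a x • f x) ∈ regularMaps R V :=
  (regularMaps R V).smul_mem ⟨a, ha⟩ hf

theorem comp_mem_regularMaps (L : V →ₗ[K] W) {f : X → V} (hf : f ∈ regularMaps R V) :
    (fun x => L (f x)) ∈ regularMaps R W := by
  unfold regularMaps at hf
  induction hf using Submodule.span_induction with
  | mem f hf =>
    obtain ⟨v, rfl⟩ := hf
    exact const_mem_regularMaps (L v)
  | zero => simpa using const_mem_regularMaps (R := R) (X := X) (0 : W)
  | add f g _ _ hf hg =>
    convert (regularMaps R W).add_mem hf hg using 1
    exact funext fun x => map_add L (f x) (g x)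
  | smul a f _ hf =>
    convert (regularMaps R W).smul_mem a hf using 1
    exact funext fun x => L.map_smul (a.1 x) (f x)

theorem mem_of_mem_regularMaps_self {f : X → K} (hf : f ∈ regularMaps R K) : f ∈ R := by
  unfold regularMaps at hf
  induction hf using Submodule.span_induction with
  | mem f hf =>
    obtain ⟨k, rfl⟩ := hf
    exact R.algebraMap_mem k
  | zero => exact R.zero_mem
  | add f g _ _ hf hg => exact R.add_mem hf hg
  | smul a f _ hf => exact R.mul_mem a.2 hf

theorem det_mem {r : ℕ} {A : X → Matrix (Fin r) (Fin r) K}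
    (hA : ∀ k l, (fun x => A x k l) ∈ R) : (fun x => (A x).det) ∈ R := by
  let A' : Matrix (Fin r) (Fin r) R := fun k l => ⟨_, hA k l⟩
  have hdet : (fun x => (A x).det) = A'.det := funext fun x =>
    (((Pi.evalRingHom (fun _ : X => K) x).comp R.val.toRingHom).map_det A').symm
  exact hdet ▸ A'.det.2

theorem exists_coordinates_finrank_map (f : V →ₗ[K] W) (G : Submodule K V)
    [FiniteDimensional K G] :
    ∃ (y : Fin (Module.finrank K (G.map f)) → V)
      (L : W →ₗ[K] (Fin (Module.finrank K (G.map f)) → K)),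
      (∀ k, y k ∈ G) ∧ ∀ k, L (f (y k)) = Pi.single k 1 := by
  classical
  let b := Module.finBasis K (G.map f)
  choose y hyG hy using fun k => (b k).2
  obtain ⟨L, hL⟩ := b.equivFun.toLinearMap.exists_extend
  refine ⟨y, L, hyG, fun k => ?_⟩
  have hLk := LinearMap.congr_fun hL (b k)
  rw [LinearMap.comp_apply, Submodule.subtype_apply] at hLk
  rw [hy, hLk]
  simp [Finsupp.single_eq_pi_single]

theorem le_finrank_map_of_det_ne_zero {f : V →ₗ[K] W} {G : Submodule K V} [FiniteDimensional K G]
    {r : ℕ} {y : Fin r → V} (hy : ∀ k, y k ∈ G) (L : W →ₗ[K] (Fin r → K))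
    (hdet : (Matrix.of fun k => L (f (y k))).det ≠ 0) : r ≤ Module.finrank K (G.map f) := by
  have hind : LinearIndependent K fun k => f (y k) :=
    LinearIndependent.of_comp L (Matrix.linearIndependent_rows_of_det_ne_zero hdet)
  have hind' : LinearIndependent K fun k => (⟨f (y k), y k, hy k, rfl⟩ : G.map f) :=
    LinearIndependent.of_comp (G.map f).subtype hind
  simpa using hind'.fintype_card_le_finrank

theorem exists_mem_finrank_map_le {f : X → V →ₗ[K] W} {G : Submodule K V}
    [FiniteDimensional K G] (hf : ∀ y ∈ G, (fun x => f x y) ∈ regularMaps R W) (x₀ : X) :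
    ∃ a ∈ R, a x₀ ≠ 0 ∧ ∀ x, a x ≠ 0 →
      Module.finrank K (G.map (f x₀)) ≤ Module.finrank K (G.map (f x)) := by
  classical
  obtain ⟨y, L, hyG, hL⟩ := exists_coordinates_finrank_map (f x₀) G
  refine ⟨fun x => (Matrix.of fun k => L (f x (y k))).det, det_mem fun k l => ?_, ?_,
    fun x hx => le_finrank_map_of_det_ne_zero hyG L hx⟩
  · exact mem_of_mem_regularMaps_self
      (comp_mem_regularMaps (LinearMap.proj l ∘ₗ L) (hf (y k) (hyG k)))
  · have hone : Matrix.of (fun k => L (f x₀ (y k))) = 1 := by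
      ext k l
      simp [hL, Matrix.one_apply, Pi.single_apply, eq_comm]
    simp [hone]

/-- A family of bilinear actions on a graded space that is regular on the products of total degree
at most `D`. The degree bound is needed because a torus degeneration of a monomial order is
available only in bounded degrees. -/
def IsRegularAction (R : Subalgebra K (X → K)) (D : ℤ) (G : ℤ → Submodule K V)
    (μ : X → PS K n →ₗ[K] V →ₗ[K] V) : Prop :=
  ∀ a p, a + p ≤ D → ∀ s ∈ polyGrade K n a, ∀ v ∈ G p, (fun x => μ x s v) ∈ regularMaps R V

theorem isRegularAction_const (D : ℤ) (G : ℤ → Submodule K V) (μ : PS K n →ₗ[K] V →ₗ[K] V) :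
    IsRegularAction R D G fun _ => μ :=
  fun _ _ _ s _ v _ => const_mem_regularMaps (μ s v)

theorem barStep_mem_regularMaps {GV : ℤ → Submodule K V} {GB : ℤ → Submodule K B}
    (hV : ∀ d < 0, GV d = ⊥) (hB : ∀ d < 0, GB d = ⊥) {D : ℤ}
    {μ : X → PS K n →ₗ[K] V →ₗ[K] V} {c : X → PS K n ⊗[K] B →ₗ[K] B}
    (hμ : IsRegularAction R D GV μ)
    (hc : ∀ d ≤ D, ∀ y ∈ tensorGrade K (polyGrade K n) GB d,
      (fun x => c x y) ∈ regularMaps R B) :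
    ∀ d ≤ D, ∀ z ∈ tensorGrade K GV (tensorGrade K (polyGrade K n) GB) d,
      (fun x => barStep (μ x) (c x) z) ∈ regularMaps R (V ⊗[K] B) := by
  intro d hd
  let F : V ⊗[K] (PS K n ⊗[K] B) →ₗ[K] (X → V ⊗[K] B) := LinearMap.pi fun x => barStep (μ x) (c x)
  let Q := (regularMaps R (V ⊗[K] B)).restrictScalars K
  refine map_mem_of_mem_tensorGrade (f := F) (Q := Q) fun p v hv => ?_
  refine map_mem_of_mem_tensorGrade (f := F ∘ₗ TensorProduct.mk K _ _ v) (Q := Q)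
    fun a s hs t ht => ?_
  rcases lt_or_ge p 0 with hp | hp
  · obtain rfl : v = 0 := (Submodule.mem_bot K).1 (hV p hp ▸ hv)
    simp
  rcases lt_or_ge (d - p - a) 0 with hq | hq
  · obtain rfl : t = 0 := (Submodule.mem_bot K).1 (hB _ hq ▸ ht)
    simp
  have hF : (F ∘ₗ TensorProduct.mk K _ _ v) (s ⊗ₜ t) =
      (fun x => μ x s v ⊗ₜ t) - fun x => v ⊗ₜ c x (s ⊗ₜ t) :=
    funext fun x => barStep_tmul (μ x) (c x) v s t
  rw [hF]
  exact (regularMaps R (V ⊗[K] B)).sub_mem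
    (comp_mem_regularMaps ((TensorProduct.mk K V B).flip t) (hμ a p (by omega) s hs v hv))
    (comp_mem_regularMaps (TensorProduct.mk K V B v)
      (hc (d - p) (by omega) _ (tmul_mem_tensorGrade hs ht (by ring))))

theorem barDGrade_eq_bot_of_neg {GW : ℤ → Submodule K W} (hW : ∀ d < 0, GW d = ⊥) (i : ℕ) :
    ∀ d < 0, barDGrade K n W GW i d = ⊥ := by
  induction i with
  | zero => exact hW
  | succ i ih => exact fun d => tensorGrade_eq_bot_of_neg (fun _ => polyGrade_of_neg) ih

theorem barContraction_mem_regularMaps {GW : ℤ → Submodule K W} (hW : ∀ d < 0, GW d = ⊥) {D : ℤ}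
    {ν : X → PS K n →ₗ[K] W →ₗ[K] W} (hν : IsRegularAction R D GW ν) (i : ℕ) :
    ∀ d ≤ D, ∀ y ∈ barDGrade K n W GW (i + 1) d,
      (fun x => barContraction (ν x) i y) ∈ regularMaps R (barD K n W i) := by
  induction i with
  | zero =>
    intro d hd
    refine map_mem_of_mem_tensorGrade (f := LinearMap.pi fun x => TensorProduct.lift (ν x))
      (Q := (regularMaps R W).restrictScalars K) fun p s hs w hw => ?_
    have hlift : LinearMap.pi (fun x => TensorProduct.lift (ν x)) (s ⊗ₜ w) = fun x => ν x s w :=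
      funext fun x => TensorProduct.lift.tmul s w
    rw [hlift]
    exact hν p (d - p) (by omega) s hs w hw
  | succ i ih =>
    exact barStep_mem_regularMaps (fun _ => polyGrade_of_neg) (barDGrade_eq_bot_of_neg hW i)
      (isRegularAction_const D _ _) ih

theorem exists_mem_strandRank_le {GV : ℤ → Submodule K V} {GW : ℤ → Submodule K W}
    (hV : IsFiniteGrading GV) (hW : IsFiniteGrading GW) {j : ℤ}
    {μ : X → PS K n →ₗ[K] V →ₗ[K] V} {ν : X → PS K n →ₗ[K] W →ₗ[K] W}
    (hμ : IsRegularAction R j GV μ) (hν : IsRegularAction R j GW ν) (i : ℕ) (x₀ : X) :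
    ∃ a ∈ R, a x₀ ≠ 0 ∧ ∀ x, a x ≠ 0 →
      strandRank GV GW (μ x₀) (ν x₀) i j ≤ strandRank GV GW (μ x) (ν x) i j := by
  have : FiniteDimensional K
      (tensorGrade K GV (tensorGrade K (polyGrade K n) (barDGrade K n W GW i)) j) :=
    (hV.tensorGrade (isFiniteGrading_barDGrade (n := n) hW (i + 1))).finiteDimensional j
  exact exists_mem_finrank_map_le (barStep_mem_regularMaps hV.eq_bot_of_neg
    (barDGrade_eq_bot_of_neg hW.eq_bot_of_neg i) hμ
    (barContraction_mem_regularMaps hW.eq_bot_of_neg hν i) j le_rfl) x₀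

end Families

/-! ### Regular functions and general coordinate changes -/

section RegularFunctions

variable {K : Type} [Field K] {n : ℕ} {X σ : Type}

/-- The functions on `X` that are polynomial expressions in a family of coordinate functions
`c · s`, for `s : σ`. -/
def regularFunctions (c : X → σ → K) : Subalgebra K (X → K) :=
  (aeval fun s x => c x s : MvPolynomial σ K →ₐ[K] X → K).range

theorem mem_regularFunctions_iff {c : X → σ → K} {a : X → K} :
    a ∈ regularFunctions c ↔ ∃ F : MvPolynomial σ K, ∀ x, a x = eval (c x) F := by
  have heval (F : MvPolynomial σ K) (x : X) :
      (aeval fun s x => c x s : MvPolynomial σ K →ₐ[K] X → K) F x = eval (c x) F :=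
    (comp_aeval_apply (fun s x => c x s) (Pi.evalAlgHom K (fun _ : X => K) x) F).trans
      (by rw [← coe_aeval_eq_eval]; rfl)
  simp only [← heval]
  exact exists_congr fun F => ⟨fun h x => (congrFun h x).symm, fun h => (funext h).symm⟩

theorem coordinate_mem_regularFunctions (c : X → σ → K) (s : σ) :
    (fun x => c x s) ∈ regularFunctions c :=
  mem_regularFunctions_iff.2 ⟨MvPolynomial.X s, fun _ => (eval_X s).symm⟩

variable (K) in
/-- The polynomial functions on the affine line. -/
def lineFunctions : Subalgebra K (K → K) :=
  regularFunctions fun t (_ : Unit) => t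

theorem exists_unit_ne_zero_of_mem_lineFunctions [Infinite K] {a : K → K}
    (ha : a ∈ lineFunctions K) {t₀ : K} (ht₀ : a t₀ ≠ 0) : ∃ t : Kˣ, a t ≠ 0 := by
  obtain ⟨F, hF⟩ := mem_regularFunctions_iff.1 ha
  have hF0 : F ≠ 0 := by
    rintro rfl
    exact ht₀ (by rw [hF, map_zero])
  by_contra! hzero
  refine mul_ne_zero (X_ne_zero ()) hF0 (MvPolynomial.funext fun x => ?_)
  rw [map_mul, eval_X, map_zero, mul_eq_zero, or_iff_not_imp_left]
  exact fun hx => (hF (x ())).symm.trans (hzero (Units.mk0 _ hx))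

variable (K n) in
/-- The functions on `GL_n` that are polynomial in the matrix entries. -/
def glFunctions : Subalgebra K (GL (Fin n) K → K) :=
  regularFunctions fun g (p : Fin n × Fin n) => (g : Matrix (Fin n) (Fin n) K) p.1 p.2

theorem generally_of_mem_glFunctions {a : GL (Fin n) K → K} (ha : a ∈ glFunctions K n)
    {g₀ : GL (Fin n) K} (hg₀ : a g₀ ≠ 0) {P : GL (Fin n) K → Prop} (hP : ∀ g, a g ≠ 0 → P g) :
    generally K n P := by
  obtain ⟨F, hF⟩ := mem_regularFunctions_iff.1 ha
  refine ⟨F, ?_, fun g hg => hP g (by rwa [hF])⟩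
  rintro rfl
  exact hg₀ (by rw [hF, map_zero])

theorem generally_forall_mem {ι : Type} (s : Finset ι) {P : ι → GL (Fin n) K → Prop}
    (hP : ∀ i ∈ s, generally K n (P i)) : generally K n fun g => ∀ i ∈ s, P i g := by
  choose! F hF0 hF using hP
  refine ⟨∏ i ∈ s, F i, Finset.prod_ne_zero_iff.2 hF0, fun g hg i hi => hF i hi g ?_⟩
  rw [map_prod] at hg
  exact Finset.prod_ne_zero_iff.1 hg i hi

theorem generally.mono {P Q : GL (Fin n) K → Prop} (hP : generally K n P)
    (h : ∀ g, P g → Q g) : generally K n Q := by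
  obtain ⟨F, hF0, hF⟩ := hP
  exact ⟨F, hF0, fun g hg => h g (hF g hg)⟩

theorem generally.exists [Infinite K] {P : GL (Fin n) K → Prop} (hP : generally K n P) :
    ∃ g, P g := by
  obtain ⟨F, hF0, hF⟩ := hP
  by_contra! hnot
  refine mul_ne_zero hF0 (Matrix.det_mvPolynomialX_ne_zero (Fin n) K)
    (MvPolynomial.funext fun x => ?_)
  rw [map_mul, map_zero, Matrix.eval_det_mvPolynomialX, mul_eq_zero, or_iff_not_imp_right]
  intro hdet
  by_contra hFx
  exact hnot (Matrix.GeneralLinearGroup.mkOfDetNeZero (Matrix.of fun i j => x (i, j)) hdet)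
    (hF _ hFx)

end RegularFunctions

/-! ### Quotients by homogeneous ideals -/

section Quotients

variable {K : Type} [Field K] {n : ℕ}

theorem mk_mem_quotGrade (I : Ideal (PS K n)) {d : ℤ} {f : PS K n} (hf : f ∈ polyGrade K n d) :
    Ideal.Quotient.mk I f ∈ quotGrade K n I d :=
  Submodule.mem_map_of_mem hf

theorem IsHomog.polyProj_mem {I : Ideal (PS K n)} (hI : IsHomog K n I) (d : ℤ) {f : PS K n}
    (hf : f ∈ I) : polyProj d f ∈ I := by
  rcases lt_or_ge d 0 with hd | hd
  · rw [polyProj_of_neg hd]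
    exact I.zero_mem
  · lift d to ℕ using hd
    rw [polyProj_natCast]
    exact hI f hf d

theorem IsHomog.exists_proj_quotGrade {I : Ideal (PS K n)} (hI : IsHomog K n I) :
    ∃ p : ℤ → (PS K n ⧸ I) →ₗ[K] (PS K n ⧸ I), (∀ d, ∀ x ∈ quotGrade K n I d, p d x = x) ∧
      ∀ d e, d ≠ e → ∀ x ∈ quotGrade K n I e, p d x = 0 := by
  let p (d : ℤ) : (PS K n ⧸ I) →ₗ[K] (PS K n ⧸ I) :=
    Submodule.mapQ (I.restrictScalars K) (I.restrictScalars K) (polyProj d)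
      fun _ hf => hI.polyProj_mem d hf
  have hp (d : ℤ) (f : PS K n) :
      p d (Ideal.Quotient.mk I f) = Ideal.Quotient.mk I (polyProj d f) := rfl
  refine ⟨p, ?_, ?_⟩
  · rintro d _ ⟨f, hf, rfl⟩
    refine (hp d f).trans ?_
    rw [polyProj_apply_of_mem hf, if_pos rfl]
    rfl
  · rintro d e hde _ ⟨f, hf, rfl⟩
    refine (hp d f).trans ?_
    rw [polyProj_apply_of_mem hf, if_neg hde, map_zero]

theorem IsHomog.isFiniteGrading_quotGrade {I : Ideal (PS K n)} (hI : IsHomog K n I) :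
    IsFiniteGrading (quotGrade K n I) where
  eq_bot_of_neg d hd := by rw [quotGrade, polyGrade_of_neg hd, Submodule.map_bot]
  finiteDimensional d := by
    have := (isFiniteGrading_polyGrade (K := K) (n := n)).finiteDimensional d
    unfold quotGrade
    infer_instance
  iSup_eq_top := by
    unfold quotGrade
    rw [← Submodule.map_iSup, isFiniteGrading_polyGrade.iSup_eq_top, Submodule.map_top]
    exact LinearMap.range_eq_top.2 Ideal.Quotient.mk_surjective
  exists_proj := hI.exists_proj_quotGrade

theorem isGradedAction_smulBilin_quotient (I : Ideal (PS K n)) :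
    IsGradedAction (quotGrade K n I) (smulBilin K n (PS K n ⧸ I)) := by
  rintro a p s hs _ ⟨f, hf, rfl⟩
  exact mk_mem_quotGrade I (isGradedAction_mul a p s hs f hf)

/-- The dimension of the degree `j` component of the `i`-th term of the bar complex that computes
`Tor^S(S/I, S/J)`. -/
def quotDim (I J : Ideal (PS K n)) (i : ℕ) (j : ℤ) : ℕ :=
  strandDim n (quotGrade K n I) (quotGrade K n J) i j

/-- The rank in degree `j` of the `i`-th differential of the bar complex that computes
`Tor^S(S/I, S/J)`. -/
def quotRank (I J : Ideal (PS K n)) (i : ℕ) (j : ℤ) : ℕ :=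
  strandRank (quotGrade K n I) (quotGrade K n J) (smulBilin K n (PS K n ⧸ I))
    (smulBilin K n (PS K n ⧸ J)) i j

theorem finrank_range_barB_inf {I J : Ideal (PS K n)} (hI : IsHomog K n I) (hJ : IsHomog K n J)
    (i : ℕ) (j : ℤ) :
    Module.finrank K ↥(LinearMap.range (barB K n (PS K n ⧸ J) (PS K n ⧸ I) i) ⊓
      tensorGrade K (quotGrade K n I) (barDGrade K n (PS K n ⧸ J) (quotGrade K n J) i) j) =
      quotRank I J i j := by
  have hI' := hI.isFiniteGrading_quotGrade
  have hJ' := hJ.isFiniteGrading_quotGrade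
  rw [barB_eq_barDifferential, range_inf_eq_map
    (hI'.tensorGrade (isFiniteGrading_barDGrade hJ' (i + 1)))
    (hI'.tensorGrade (isFiniteGrading_barDGrade hJ' i)) _
    (barDifferential_mem_tensorGrade (isGradedAction_smulBilin_quotient I)
      (isGradedAction_smulBilin_quotient J) i)]
  rfl

theorem torQQ_zero {I J : Ideal (PS K n)} (hI : IsHomog K n I) (hJ : IsHomog K n J) (j : ℤ) :
    torQQ K n I J 0 j = quotDim I J 0 j - quotRank I J 0 j := by
  rw [← finrank_range_barB_inf hI hJ]
  rfl

theorem torQQ_succ {I J : Ideal (PS K n)} (hI : IsHomog K n I) (hJ : IsHomog K n J) (i : ℕ)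
    (j : ℤ) :
    torQQ K n I J (i + 1) j =
      quotDim I J (i + 1) j - quotRank I J i j - quotRank I J (i + 1) j := by
  have := (hI.isFiniteGrading_quotGrade.tensorGrade
    (isFiniteGrading_barDGrade (n := n) hJ.isFiniteGrading_quotGrade (i + 1))).finiteDimensional j
  simp only [torQQ, torStrandDim]
  rw [finrank_range_barB_inf hI hJ, barB_eq_barDifferential, finrank_ker_inf]
  rfl

theorem torQQ_eq_zero_of_lt {I J : Ideal (PS K n)} (hI : IsHomog K n I) (hJ : IsHomog K n J)
    {i : ℕ} {j : ℤ} (hj : j < i) : torQQ K n I J i j = 0 := by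
  have hI' := hI.isFiniteGrading_quotGrade
  have hJ' := hJ.isFiniteGrading_quotGrade
  cases i with
  | zero =>
    have hbot := tensorGrade_eq_bot_of_neg hI'.eq_bot_of_neg
      (barDGrade_eq_bot_of_neg (n := n) hJ'.eq_bot_of_neg 0) (by simpa using hj)
    rw [torQQ_zero hI hJ, quotDim, strandDim, hbot, finrank_bot, Nat.zero_sub]
  | succ i =>
    have := (hI'.tensorGrade (isFiniteGrading_barDGrade (n := n) hJ' (i + 1))).finiteDimensional j
    simp only [torQQ, torStrandDim]
    rw [Nat.sub_eq_zero_iff_le, barB_eq_barDifferential, barB_eq_barDifferential]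
    exact Submodule.finrank_mono <| le_inf (ker_barDifferential_inf_le_range hI'.eq_bot_of_neg
      hJ'.eq_bot_of_neg (one_smul _) (one_smul _) (by exact_mod_cast hj)) inf_le_right

end Quotients

/-! ### Changes of coordinates -/

section Coordinates

variable {K : Type} [Field K] {n : ℕ}

theorem coordChange_X (g : GL (Fin n) K) (k : Fin n) :
    coordChange K n g (X k) = ∑ l, (g : Matrix (Fin n) (Fin n) K) l k • X l :=
  aeval_X _ k

theorem coordChange_mul (g h : GL (Fin n) K) :
    coordChange K n (g * h) = (coordChange K n g).comp (coordChange K n h) := by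
  refine algHom_ext fun k => ?_
  simp only [AlgHom.comp_apply, coordChange_X, map_sum, map_smul, Finset.smul_sum, smul_smul]
  rw [Finset.sum_comm]
  refine Finset.sum_congr rfl fun l _ => ?_
  rw [← Finset.sum_smul, Units.val_mul, Matrix.mul_apply]
  simp only [mul_comm]

theorem coordChange_one : coordChange K n 1 = AlgHom.id K (PS K n) := by
  refine algHom_ext fun k => ?_
  simp [coordChange_X, Matrix.one_apply]

theorem map_coordChange_mul (g h : GL (Fin n) K) (I : Ideal (PS K n)) :
    I.map (coordChange K n (g * h)) = (I.map (coordChange K n h)).map (coordChange K n g) := by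
  rw [Ideal.map_mapₐ, coordChange_mul]

/-- `coordChange` as an automorphism of the polynomial ring. -/
def coordEquiv (g : GL (Fin n) K) : PS K n ≃ₐ[K] PS K n :=
  AlgEquiv.ofAlgHom (coordChange K n g) (coordChange K n g⁻¹)
    (by rw [← coordChange_mul, mul_inv_cancel, coordChange_one])
    (by rw [← coordChange_mul, inv_mul_cancel, coordChange_one])

theorem mem_map_coordChange_inv_iff {g : GL (Fin n) K} {I : Ideal (PS K n)} {f : PS K n} :
    f ∈ I.map (coordChange K n g⁻¹) ↔ coordChange K n g f ∈ I := by
  rw [Ideal.mem_map_iff_of_surjective (coordChange K n g⁻¹) (coordEquiv g⁻¹).surjective]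
  constructor
  · rintro ⟨e, he, rfl⟩
    exact ((coordEquiv g).apply_symm_apply e).symm ▸ he
  · exact fun hf => ⟨_, hf, (coordEquiv g).symm_apply_apply f⟩

theorem coordChange_mem_polyGrade (g : GL (Fin n) K) (d : ℤ) :
    ∀ f ∈ polyGrade K n d, coordChange K n g f ∈ polyGrade K n d := by
  intro f hf
  rcases lt_or_ge d 0 with hd | hd
  · rw [polyGrade_of_neg hd, Submodule.mem_bot] at hf
    rw [hf, map_zero]
    exact zero_mem _
  · lift d to ℕ using hd
    rw [polyGrade_natCast, mem_homogeneousSubmodule] at hf ⊢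
    have hlinear (k : Fin n) :
        IsHomogeneous (∑ l, (g : Matrix (Fin n) (Fin n) K) l k • (X l : PS K n)) 1 :=
      (homogeneousSubmodule (Fin n) K 1).sum_mem fun l _ =>
        Submodule.smul_mem _ _ (isHomogeneous_X K l)
    exact one_mul d ▸ hf.aeval _ hlinear

theorem isGradedEquiv_coordEquiv (g : GL (Fin n) K) :
    IsGradedEquiv (polyGrade K n) (polyGrade K n) (coordEquiv g).toLinearEquiv :=
  isGradedEquiv_of_forall_mem (coordChange_mem_polyGrade g) (coordChange_mem_polyGrade g⁻¹)

theorem polyProj_coordChange (g : GL (Fin n) K) (d : ℤ) (f : PS K n) :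
    polyProj d (coordChange K n g f) = coordChange K n g (polyProj d f) := by
  refine mem_of_forall_le_of_iSup_eq_top isFiniteGrading_polyGrade.iSup_eq_top
    (Q := LinearMap.eqLocus (polyProj d ∘ₗ (coordChange K n g).toLinearMap)
      ((coordChange K n g).toLinearMap ∘ₗ polyProj d)) (fun e f hf => ?_) f
  change polyProj d (coordChange K n g f) = coordChange K n g (polyProj d f)
  rw [polyProj_apply_of_mem hf, polyProj_apply_of_mem (coordChange_mem_polyGrade g e f hf)]
  split_ifs
  · rfl
  · exact (map_zero _).symm

theorem IsHomog.map_coordChange {I : Ideal (PS K n)} (hI : IsHomog K n I) (g : GL (Fin n) K) :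
    IsHomog K n (I.map (coordChange K n g)) := by
  intro f hf d
  obtain ⟨e, he, rfl⟩ :=
    (Ideal.mem_map_iff_of_surjective (coordChange K n g) (coordEquiv g).surjective).1 hf
  rw [← polyProj_natCast, polyProj_coordChange]
  exact Ideal.mem_map_of_mem _ (hI.polyProj_mem d he)

/-- The isomorphism `S/I ≃ S/g(I)` induced by a change of coordinates. -/
def quotCoordEquiv (g : GL (Fin n) K) (I : Ideal (PS K n)) :
    (PS K n ⧸ I) ≃ₗ[K] (PS K n ⧸ I.map (coordChange K n g)) :=
  (Ideal.quotientEquivAlg I (I.map (coordChange K n g)) (coordEquiv g) rfl).toLinearEquiv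

theorem isGradedEquiv_quotCoordEquiv (g : GL (Fin n) K) (I : Ideal (PS K n)) :
    IsGradedEquiv (quotGrade K n I) (quotGrade K n (I.map (coordChange K n g)))
      (quotCoordEquiv g I) := by
  refine isGradedEquiv_of_forall_mem ?_ ?_
  · rintro d _ ⟨f, hf, rfl⟩
    exact mk_mem_quotGrade _ (coordChange_mem_polyGrade g d f hf)
  · rintro d _ ⟨f, hf, rfl⟩
    exact mk_mem_quotGrade I (coordChange_mem_polyGrade g⁻¹ d f hf)

theorem quotCoordEquiv_smul (g : GL (Fin n) K) (I : Ideal (PS K n)) (s : PS K n) (x : PS K n ⧸ I) :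
    quotCoordEquiv g I (s • x) = coordChange K n g s • quotCoordEquiv g I x := by
  obtain ⟨f, rfl⟩ := Ideal.Quotient.mk_surjective x
  exact congrArg (Ideal.Quotient.mk _) (map_mul (coordChange K n g) s f)

theorem quotRank_map_coordChange (g : GL (Fin n) K) (I J : Ideal (PS K n)) (i : ℕ) (j : ℤ) :
    quotRank (I.map (coordChange K n g)) (J.map (coordChange K n g)) i j = quotRank I J i j :=
  (strandRank_congr (isGradedEquiv_coordEquiv g) (isGradedEquiv_quotCoordEquiv g I)
    (isGradedEquiv_quotCoordEquiv g J) (quotCoordEquiv_smul g I) (quotCoordEquiv_smul g J) i j).symm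

theorem quotRank_map_coordChange_left_right (g h : GL (Fin n) K) (I J : Ideal (PS K n)) (i : ℕ)
    (j : ℤ) :
    quotRank (I.map (coordChange K n g)) (J.map (coordChange K n h)) i j =
      quotRank I (J.map (coordChange K n (g⁻¹ * h))) i j := by
  rw [← quotRank_map_coordChange g I, ← map_coordChange_mul, mul_inv_cancel_left]

/-- The action of `S` on `S/I` twisted by a change of coordinates. -/
def twistedAction (I : Ideal (PS K n)) (g : GL (Fin n) K) :
    PS K n →ₗ[K] (PS K n ⧸ I) →ₗ[K] (PS K n ⧸ I) :=
  smulBilin K n (PS K n ⧸ I) ∘ₗ (coordChange K n g).toLinearMap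

theorem strandRank_twistedAction (g : GL (Fin n) K) (I J : Ideal (PS K n)) (i : ℕ) (j : ℤ) :
    strandRank (quotGrade K n I) (quotGrade K n J) (twistedAction I g)
      (smulBilin K n (PS K n ⧸ J)) i j = quotRank I (J.map (coordChange K n g)) i j :=
  strandRank_congr (isGradedEquiv_coordEquiv g) (IsGradedEquiv.refl _)
    (isGradedEquiv_quotCoordEquiv g J) (fun _ _ => rfl) (quotCoordEquiv_smul g J) i j

theorem coordChange_mem_regularMaps (s : PS K n) :
    (fun g => coordChange K n g s) ∈ regularMaps (glFunctions K n) (PS K n) := by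
  induction s using MvPolynomial.induction_on with
  | C a =>
    simp only [algHom_C]
    exact const_mem_regularMaps _
  | add p q hp hq =>
    simp only [map_add]
    exact (regularMaps _ _).add_mem hp hq
  | mul_X p k hp =>
    have hexpand : (fun g : GL (Fin n) K => coordChange K n g (p * X k)) =
        ∑ l, fun g : GL (Fin n) K => (g : Matrix (Fin n) (Fin n) K) l k •
          LinearMap.mulRight K (X l) (coordChange K n g p) := by
      funext g
      rw [map_mul, coordChange_X, Finset.mul_sum, Finset.sum_apply]
      exact Finset.sum_congr rfl fun l _ => mul_smul_comm _ _ _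
    rw [hexpand]
    exact (regularMaps _ _).sum_mem fun l _ => smul_mem_regularMaps
      (coordinate_mem_regularFunctions _ (l, k)) (comp_mem_regularMaps _ hp)

theorem isRegularAction_twistedAction (I : Ideal (PS K n)) (D : ℤ) :
    IsRegularAction (glFunctions K n) D (quotGrade K n I) (twistedAction I) :=
  fun _ _ _ s _ x _ =>
    comp_mem_regularMaps ((smulBilin K n (PS K n ⧸ I)).flip x) (coordChange_mem_regularMaps s)

theorem generally_quotRank_le {I J : Ideal (PS K n)} (hI : IsHomog K n I) (hJ : IsHomog K n J)
    (g₀ : GL (Fin n) K) (i : ℕ) (j : ℤ) :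
    generally K n fun g => quotRank I (J.map (coordChange K n g₀)) i j ≤
      quotRank I (J.map (coordChange K n g)) i j := by
  obtain ⟨a, ha, ha₀, hle⟩ := exists_mem_strandRank_le hI.isFiniteGrading_quotGrade
    hJ.isFiniteGrading_quotGrade (isRegularAction_twistedAction I j)
    (isRegularAction_const j _ (smulBilin K n (PS K n ⧸ J))) i g₀
  simp only [strandRank_twistedAction] at hle
  exact generally_of_mem_glFunctions ha ha₀ hle

end Coordinates

/-! ### Monomial orders and weights -/

section MonomialOrders

open scoped MonomialOrder

/-- The weights defined by `w` order the exponents of degree at most `D` in the same way as the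
monomial order `m`. -/
def IsWeightUpTo {σ : Type*} (m : MonomialOrder σ) (D : ℕ) (w : σ → ℕ) : Prop :=
  ∀ a b : σ →₀ ℕ, a.degree ≤ D → b.degree ≤ D → a ≺[m] b →
    Finsupp.weight w a < Finsupp.weight w b

/-- In bounded degrees, the monomial order `m` is given by integral weights. -/
def HasWeights {σ : Type*} (m : MonomialOrder σ) : Prop :=
  ∀ D : ℕ, ∃ w : σ → ℕ, IsWeightUpTo m D w

theorem weight_pow_lt_weight_pow {ι : Type*} [Finite ι] {ρ : ι → ℕ}
    (hρ : Function.Injective ρ) {D : ℕ} {a b : ι →₀ ℕ} (ha : a.degree ≤ D) {k : ι}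
    (heq : ∀ l, ρ k < ρ l → a l = b l) (hlt : a k < b k) :
    Finsupp.weight (fun l => (D + 1) ^ ρ l) a < Finsupp.weight (fun l => (D + 1) ^ ρ l) b := by
  classical
  have := Fintype.ofFinite ι
  set w : ι → ℕ := fun l => (D + 1) ^ ρ l with hw
  have weight_eq : ∀ c : ι →₀ ℕ, Finsupp.weight w c = ∑ l, c l * w l := fun c => by
    rw [Finsupp.weight_apply, Finsupp.sum_fintype _ _ (by simp only [zero_smul, implies_true])]
    simp only [smul_eq_mul]
  have termwise_le : ∀ l, (D + 1) * (a l * w l) + (if l = k then (D + 1) * w k else 0) ≤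
      (D + 1) * (b l * w l) + w k * a l := fun l => by
    rcases lt_trichotomy (ρ k) (ρ l) with h | h | h
    · have hne : l ≠ k := by rintro rfl; exact h.false
      rw [heq l h, if_neg hne]
      exact Nat.le_add_right _ _
    · obtain rfl := hρ h
      rw [if_pos rfl, ← mul_add, ← Nat.succ_mul]
      exact (Nat.mul_le_mul_left _ (Nat.mul_le_mul_right _ hlt)).trans (Nat.le_add_right _ _)
    · have hne : l ≠ k := by rintro rfl; exact h.false
      have hwl : (D + 1) * w l ≤ w k := by
        rw [hw, ← pow_succ']
        exact Nat.pow_le_pow_right D.succ_pos h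
      rw [if_neg hne, add_zero, mul_left_comm, mul_comm (a l)]
      exact (Nat.mul_le_mul_right _ hwl).trans (Nat.le_add_left _ _)
  have hsum := Finset.sum_le_sum (s := Finset.univ) fun l _ => termwise_le l
  simp only [Finset.sum_add_distrib, ← Finset.mul_sum, Finset.sum_ite_eq', Finset.mem_univ,
    if_true, ← weight_eq, ← Finsupp.degree_eq_sum] at hsum
  have hdeg : w k * a.degree < (D + 1) * w k := by
    rw [mul_comm]
    exact Nat.mul_lt_mul_of_pos_right (Nat.lt_succ_of_le ha) (pow_pos D.succ_pos _)
  exact lt_of_mul_lt_mul_left (a := D + 1) (by omega) (Nat.zero_le _)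

theorem hasWeights_lex (n : ℕ) : HasWeights (MonomialOrder.lex (σ := Fin n)) := fun D =>
  ⟨fun l => (D + 1) ^ (Fin.rev l : ℕ), fun a b ha _ hab => by
    obtain ⟨k, heq, hlt⟩ := Finsupp.Lex.lt_iff.1 hab
    exact weight_pow_lt_weight_pow (Fin.val_injective.comp Fin.rev_injective) ha
      (fun l hl => heq l (Fin.rev_lt_rev.1 hl)) hlt⟩

/-- The opposite lexicographic order on the monomials of `K[x_1, …, x_n]`, in which
`x_n > ⋯ > x_1`. -/
def oplexOrder (n : ℕ) : MonomialOrder (Fin n) where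
  syn := Colex (Fin n →₀ ℕ)
  toSyn := { toColex with map_add' := toColex_add }
  toSyn_monotone := Finsupp.toColex_monotone

theorem hasWeights_oplexOrder (n : ℕ) : HasWeights (oplexOrder n) := fun D =>
  ⟨fun l => (D + 1) ^ (l : ℕ), fun a b ha _ hab => by
    obtain ⟨k, heq, hlt⟩ := Finsupp.Colex.lt_iff.1 hab
    exact weight_pow_lt_weight_pow Fin.val_injective ha (fun l hl => heq l hl) hlt⟩

end MonomialOrders

/-! ### Initial ideals and standard monomials -/

section InitialIdeals

open scoped MonomialOrder

variable {K : Type} [Field K] {n : ℕ} {m : MonomialOrder (Fin n)} {I : Ideal (PS K n)}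

theorem initialIdealO_eq_span :
    initialIdealO K n (· ≺[m] ·) I =
      Ideal.span ((fun c => monomial c (1 : K)) '' {c | ∃ f ∈ I, f ≠ 0 ∧ m.degree f = c}) := by
  unfold initialIdealO
  congr 1
  ext g
  constructor
  · rintro ⟨f, hf, c, hc, hmax, rfl⟩
    have hf0 : f ≠ 0 := by rintro rfl; simp at hc
    refine ⟨m.degree f, ⟨f, hf, hf0, rfl⟩, ?_⟩
    rcases hmax _ (m.degree_mem_support hf0) with h | h
    · simp only [h]
    · exact absurd h (m.le_degree hc).not_gt
  · rintro ⟨_, ⟨f, hf, hf0, rfl⟩, rfl⟩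
    exact ⟨f, hf, m.degree f, m.degree_mem_support hf0,
      fun c hc => (m.le_degree hc).eq_or_lt.imp_left fun h => m.toSyn.injective h, rfl⟩

theorem mem_initialIdealO_iff {f : PS K n} :
    f ∈ initialIdealO K n (· ≺[m] ·) I ↔
      ∀ c ∈ f.support, ∃ g ∈ I, g ≠ 0 ∧ m.degree g ≤ c := by
  rw [initialIdealO_eq_span, mem_ideal_span_monomial_image]
  exact forall₂_congr fun c _ =>
    ⟨fun ⟨_, ⟨g, hg, hg0, rfl⟩, hle⟩ => ⟨g, hg, hg0, hle⟩,
      fun ⟨g, hg, hg0, hle⟩ => ⟨_, ⟨g, hg, hg0, rfl⟩, hle⟩⟩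

theorem isHomog_initialIdealO : IsHomog K n (initialIdealO K n (· ≺[m] ·) I) := by
  intro f hf d
  rw [mem_initialIdealO_iff] at hf ⊢
  rw [← polyProj_natCast]
  exact fun c hc => hf c (support_polyProj_subset d f hc)

/-- The exponents of the standard monomials of `I`: those that are divisible by no leading
monomial of `I`. -/
def standardMonomials (m : MonomialOrder (Fin n)) (I : Ideal (PS K n)) : Set (Fin n →₀ ℕ) :=
  {c | ∀ f ∈ I, f ≠ 0 → ¬ m.degree f ≤ c}

theorem standardMonomials_initialIdealO :
    standardMonomials m (initialIdealO K n (· ≺[m] ·) I) = standardMonomials m I := by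
  classical
  ext c
  constructor
  · intro hc f hf hf0 hle
    refine hc (monomial (m.degree f) 1) (mem_initialIdealO_iff.2 fun b hb => ?_) (by simp) ?_
    · rw [Finset.mem_singleton.1 (support_monomial_subset hb)]
      exact ⟨f, hf, hf0, le_rfl⟩
    · rwa [m.degree_monomial, if_neg one_ne_zero]
  · intro hc f hf hf0 hle
    obtain ⟨g, hg, hg0, hgf⟩ := mem_initialIdealO_iff.1 hf _ (m.degree_mem_support hf0)
    exact hc g hg hg0 (hgf.trans hle)

theorem exists_standard_remainder (m : MonomialOrder (Fin n)) (I : Ideal (PS K n)) (f : PS K n) :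
    ∃ q ∈ restrictSupport K (standardMonomials m I), f - q ∈ I ∧
      m.degree q ≼[m] m.degree f := by
  obtain ⟨g, q, hfq, hdeg, hq⟩ := m.div_set (B := {b : PS K n | b ∈ I ∧ b ≠ 0})
    (fun b hb => (m.leadingCoeff_ne_zero_iff.2 hb.2).isUnit) f
  have hsub : f - q = ∑ b ∈ g.support, g b * b.1 := by
    rw [sub_eq_iff_eq_add]
    exact hfq
  refine ⟨q, fun c hc b hb hb0 => hq c hc b ⟨hb, hb0⟩, ?_, ?_⟩
  · rw [hsub]
    exact I.sum_mem fun b _ => I.mul_mem_left _ b.2.1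
  · have hdeg' : m.degree (f - q) ≼[m] m.degree f := by
      rw [hsub]
      refine m.degree_sum_le.trans (Finset.sup_le fun b _ => ?_)
      rw [mul_comm]
      exact hdeg b
    calc m.toSyn (m.degree q) = m.toSyn (m.degree (f - (f - q))) := by rw [sub_sub_cancel]
      _ ≤ m.toSyn (m.degree f) ⊔ m.toSyn (m.degree (f - q)) := m.degree_sub_le
      _ ≤ m.toSyn (m.degree f) := sup_le le_rfl hdeg'

end InitialIdeals

section MonomialBases

open scoped MonomialOrder

variable {K : Type} [Field K] {n : ℕ} {s t : Set (Fin n →₀ ℕ)} {I J : Ideal (PS K n)}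

/-- The monomials with exponents in `s` form a `K`-basis of `S/I`. -/
def IsMonomialBasis (s : Set (Fin n →₀ ℕ)) (I : Ideal (PS K n)) : Prop :=
  IsCompl (restrictSupport K s) (I.restrictScalars K)

theorem isMonomialBasis_standardMonomials (m : MonomialOrder (Fin n)) (I : Ideal (PS K n)) :
    IsMonomialBasis (standardMonomials m I) I := by
  refine ⟨Submodule.disjoint_def.2 fun f hs hf => ?_, codisjoint_iff_le_sup.2 fun f _ => ?_⟩
  · by_contra hf0
    exact hs (m.degree_mem_support hf0) f hf hf0 le_rfl
  · obtain ⟨q, hq, hfq, -⟩ := exists_standard_remainder m I f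
    exact Submodule.mem_sup.2 ⟨q, hq, f - q, hfq, add_sub_cancel q f⟩

theorem isMonomialBasis_standardMonomials_initialIdealO (m : MonomialOrder (Fin n))
    (I : Ideal (PS K n)) :
    IsMonomialBasis (standardMonomials m I) (initialIdealO K n (· ≺[m] ·) I) := by
  rw [← standardMonomials_initialIdealO]
  exact isMonomialBasis_standardMonomials m _

namespace IsMonomialBasis

/-- The remainder of a polynomial modulo `I`: its representative supported in `s`. -/
def remainder (h : IsMonomialBasis s I) : PS K n →ₗ[K] restrictSupport K s :=
  Submodule.projectionOnto _ _ h

theorem sub_remainder_mem (h : IsMonomialBasis s I) (f : PS K n) : f - h.remainder f ∈ I :=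
  Submodule.sub_projection_mem h f

theorem remainder_eq (h : IsMonomialBasis s I) {f : PS K n} {q : restrictSupport K s}
    (hq : f - q ∈ I) : h.remainder f = q := by
  have hzero : h.remainder (f - q) = 0 := (Submodule.projectionOnto_apply_eq_zero_iff h).2 hq
  rw [map_sub, sub_eq_zero] at hzero
  exact hzero.trans (Submodule.projectionOnto_apply_left h q)

theorem remainder_coe (h : IsMonomialBasis s I) (q : restrictSupport K s) :
    h.remainder (q : PS K n) = q :=
  Submodule.projectionOnto_apply_left h q

theorem remainder_mem_polyGrade (h : IsMonomialBasis s I) (hI : IsHomog K n I) {d : ℤ}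
    {f : PS K n} (hf : f ∈ polyGrade K n d) : (h.remainder f : PS K n) ∈ polyGrade K n d := by
  let q : restrictSupport K s := ⟨polyProj d (h.remainder f),
    fun _ hc => (h.remainder f).2 (support_polyProj_subset d _ hc)⟩
  have hq : f - q ∈ I := by
    have := hI.polyProj_mem d (h.sub_remainder_mem f)
    rwa [map_sub, polyProj_apply_of_mem hf, if_pos rfl] at this
  rw [h.remainder_eq hq]
  exact polyProj_mem_polyGrade d _

/-- The multiplication of `S/I`, transported to the span of a monomial basis. -/
def action (h : IsMonomialBasis s I) :
    PS K n →ₗ[K] restrictSupport K s →ₗ[K] restrictSupport K s :=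
  ((LinearMap.mul K (PS K n)).compl₂ (restrictSupport K s).subtype).compr₂ h.remainder

theorem action_apply (h : IsMonomialBasis s I) (f : PS K n) (q : restrictSupport K s) :
    h.action f q = h.remainder (f * q) :=
  rfl

/-- The isomorphism from the span of a monomial basis to `S/I`. -/
def quotientEquiv (h : IsMonomialBasis s I) : restrictSupport K s ≃ₗ[K] PS K n ⧸ I :=
  (Submodule.quotientEquivOfIsCompl _ _ h.symm).symm

theorem quotientEquiv_apply (h : IsMonomialBasis s I) (q : restrictSupport K s) :
    h.quotientEquiv q = Ideal.Quotient.mk I q :=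
  Submodule.quotientEquivOfIsCompl_symm_apply _ _ h.symm q

theorem quotientEquiv_remainder (h : IsMonomialBasis s I) (f : PS K n) :
    h.quotientEquiv (h.remainder f) = Ideal.Quotient.mk I f := by
  rw [quotientEquiv_apply, eq_comm]
  exact Ideal.Quotient.eq.2 (h.sub_remainder_mem f)

theorem quotientEquiv_action (h : IsMonomialBasis s I) (f : PS K n) (q : restrictSupport K s) :
    h.quotientEquiv (h.action f q) = smulBilin K n (PS K n ⧸ I) f (h.quotientEquiv q) := by
  rw [action_apply, quotientEquiv_remainder, quotientEquiv_apply]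
  rfl

end IsMonomialBasis

/-- The grading by degree on a span of monomials. -/
def supportGrade (s : Set (Fin n →₀ ℕ)) (d : ℤ) : Submodule K (restrictSupport K s) :=
  (polyGrade K n d).comap (restrictSupport K s).subtype

theorem IsMonomialBasis.isGradedEquiv_quotientEquiv (h : IsMonomialBasis s I)
    (hI : IsHomog K n I) :
    IsGradedEquiv (supportGrade s) (quotGrade K n I) h.quotientEquiv := by
  refine isGradedEquiv_of_forall_mem (fun d q hq => ?_) ?_
  · rw [h.quotientEquiv_apply]
    exact mk_mem_quotGrade I hq
  · rintro d _ ⟨f, hf, rfl⟩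
    change h.quotientEquiv.symm (Ideal.Quotient.mk I f) ∈ _
    rw [← h.quotientEquiv_remainder, LinearEquiv.symm_apply_apply]
    exact h.remainder_mem_polyGrade hI hf

theorem IsMonomialBasis.isFiniteGrading_supportGrade (h : IsMonomialBasis s I)
    (hI : IsHomog K n I) : IsFiniteGrading (supportGrade (K := K) s) :=
  hI.isFiniteGrading_quotGrade.congr (h.isGradedEquiv_quotientEquiv hI).symm

theorem quotDim_eq_of_isMonomialBasis (hs : IsMonomialBasis s I) (hI : IsHomog K n I)
    (ht : IsMonomialBasis t J) (hJ : IsHomog K n J) (i : ℕ) (j : ℤ) :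
    quotDim I J i j = strandDim n (supportGrade (K := K) s) (supportGrade (K := K) t) i j :=
  (strandDim_congr (hs.isGradedEquiv_quotientEquiv hI) (ht.isGradedEquiv_quotientEquiv hJ)
    i j).symm

theorem quotRank_eq_of_isMonomialBasis (hs : IsMonomialBasis s I) (hI : IsHomog K n I)
    (ht : IsMonomialBasis t J) (hJ : IsHomog K n J) (i : ℕ) (j : ℤ) :
    quotRank I J i j = strandRank (supportGrade s) (supportGrade t) hs.action ht.action i j :=
  (strandRank_congr (α := AlgEquiv.refl) (IsGradedEquiv.refl _)
    (hs.isGradedEquiv_quotientEquiv hI) (ht.isGradedEquiv_quotientEquiv hJ)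
    hs.quotientEquiv_action ht.quotientEquiv_action i j).symm

end MonomialBases

/-! ### Gröbner degeneration -/

section RegularFamilies

variable {K : Type} [Field K] {n : ℕ} {X : Type} {R : Subalgebra K (X → K)} {D : ℤ}
  {s t : Set (Fin n →₀ ℕ)} {I J : X → Ideal (PS K n)}

/-- A family of homogeneous ideals with a common monomial basis such that, in degrees up to `D`,
the remainders modulo these ideals depend `R`-regularly on the parameter. -/
structure IsRegularFamily (R : Subalgebra K (X → K)) (D : ℤ) (s : Set (Fin n →₀ ℕ))
    (I : X → Ideal (PS K n)) : Prop where
  isHomog : ∀ x, IsHomog K n (I x)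
  isMonomialBasis : ∀ x, IsMonomialBasis s (I x)
  remainder_mem : ∀ d ≤ D, ∀ f ∈ polyGrade K n d,
    (fun x => (isMonomialBasis x).remainder f) ∈ regularMaps R (restrictSupport K s)

theorem IsRegularFamily.isRegularAction (h : IsRegularFamily R D s I) :
    IsRegularAction R D (supportGrade s) fun x => (h.isMonomialBasis x).action :=
  fun _ _ hap _ hf _ hq => h.remainder_mem _ hap _ (mul_mem_polyGrade hf hq)

theorem IsRegularFamily.exists_mem_quotRank_le (hI : IsRegularFamily R D s I)
    (hJ : IsRegularFamily R D t J) (i : ℕ) (x₀ : X) :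
    ∃ a ∈ R, a x₀ ≠ 0 ∧
      ∀ x, a x ≠ 0 → quotRank (I x₀) (J x₀) i D ≤ quotRank (I x) (J x) i D := by
  have hrank x := quotRank_eq_of_isMonomialBasis (hI.isMonomialBasis x) (hI.isHomog x)
    (hJ.isMonomialBasis x) (hJ.isHomog x) i D
  simp only [hrank]
  exact exists_mem_strandRank_le
    ((hI.isMonomialBasis x₀).isFiniteGrading_supportGrade (hI.isHomog x₀))
    ((hJ.isMonomialBasis x₀).isFiniteGrading_supportGrade (hJ.isHomog x₀))
    hI.isRegularAction hJ.isRegularAction i x₀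

end RegularFamilies

section Torus

variable {K : Type} [Field K] {n : ℕ}

/-- The one-parameter subgroup `t ↦ diag(t ^ w_1, …, t ^ w_n)` of `GL_n`. -/
def torus (w : Fin n → ℕ) (t : Kˣ) : GL (Fin n) K :=
  Units.map (Matrix.diagonalRingHom (Fin n) K).toMonoidHom
    (MulEquiv.piUnits.symm fun k => t ^ w k)

theorem coe_torus (w : Fin n → ℕ) (t : Kˣ) :
    (torus w t : Matrix (Fin n) (Fin n) K) = Matrix.diagonal fun k => (t : K) ^ w k := by
  rfl

theorem coordChange_torus_X (w : Fin n → ℕ) (t : Kˣ) (k : Fin n) :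
    coordChange K n (torus w t) (X k) = C ((t : K) ^ w k) * X k := by
  rw [coordChange_X, Finset.sum_eq_single k, coe_torus, Matrix.diagonal_apply_eq, smul_eq_C_mul]
  · intro l _ hl
    rw [coe_torus, Matrix.diagonal_apply_ne _ hl, zero_smul]
  · exact fun hk => absurd (Finset.mem_univ k) hk

theorem coordChange_torus_monomial (w : Fin n → ℕ) (t : Kˣ) (c : Fin n →₀ ℕ) (a : K) :
    coordChange K n (torus w t) (monomial c a) =
      (t : K) ^ Finsupp.weight w c • monomial c a := by
  rw [monomial_eq, map_mul, algHom_C, algebraMap_eq, Finsupp.prod, map_prod, Finsupp.weight_apply,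
    Finsupp.sum, ← Finset.prod_pow_eq_pow_sum, smul_eq_C_mul, map_prod, mul_left_comm,
    ← Finset.prod_mul_distrib]
  refine congrArg _ (Finset.prod_congr rfl fun k _ => ?_)
  rw [map_pow, coordChange_torus_X, mul_pow, ← map_pow, ← pow_mul, smul_eq_mul, mul_comm (c k)]

theorem coeff_coordChange_torus (w : Fin n → ℕ) (t : Kˣ) (c : Fin n →₀ ℕ) (f : PS K n) :
    coeff c (coordChange K n (torus w t) f) = (t : K) ^ Finsupp.weight w c * coeff c f := by
  classical
  induction f using MvPolynomial.induction_on' with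
  | monomial b a =>
    rw [coordChange_torus_monomial, coeff_smul, coeff_monomial, smul_eq_mul]
    split_ifs with hb
    · rw [hb]
    · rw [mul_zero, mul_zero]
  | add f g hf hg => rw [map_add, coeff_add, coeff_add, hf, hg, mul_add]

theorem support_coordChange_torus (w : Fin n → ℕ) (t : Kˣ) (f : PS K n) :
    (coordChange K n (torus w t) f).support = f.support := by
  ext c
  simp only [mem_support_iff, coeff_coordChange_torus, ne_eq, mul_eq_zero,
    pow_ne_zero _ t.ne_zero, false_or]

theorem IsMonomialBasis.map_torus_inv {s : Set (Fin n →₀ ℕ)} {I : Ideal (PS K n)}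
    (h : IsMonomialBasis s I) (w : Fin n → ℕ) (t : Kˣ) :
    IsMonomialBasis s (I.map (coordChange K n (torus w t)⁻¹)) := by
  have hmem (f : PS K n) :
      coordChange K n (torus w t) f ∈ restrictSupport K s ↔ f ∈ restrictSupport K s := by
    simp only [mem_restrictSupport_iff, support_coordChange_torus]
  refine ⟨Submodule.disjoint_def.2 fun f hs hf => ?_, codisjoint_iff_le_sup.2 fun f _ => ?_⟩
  · exact (coordEquiv (torus w t)).injective ((Submodule.disjoint_def.1 h.disjoint _
      ((hmem f).2 hs) (mem_map_coordChange_inv_iff.1 hf)).trans (map_zero _).symm)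
  · obtain ⟨q, hq⟩ : ∃ q, coordChange K n (torus w t) q =
        h.remainder (coordChange K n (torus w t) f) := (coordEquiv (torus w t)).surjective _
    refine Submodule.mem_sup.2 ⟨q, (hmem q).1 (hq ▸ (h.remainder _).2), f - q, ?_,
      add_sub_cancel q f⟩
    rw [Submodule.restrictScalars_mem, mem_map_coordChange_inv_iff, map_sub, hq]
    exact h.sub_remainder_mem _

end Torus

section Degeneration

open scoped MonomialOrder

variable {K : Type} [Field K] {n : ℕ} {m : MonomialOrder (Fin n)} {I : Ideal (PS K n)}

open Classical in
/-- The Gröbner degeneration of `S/I` to `S/in(I)` defined by a weight vector: its general member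
is a translate of `I` under the one-parameter subgroup, its member at `0` is the initial ideal. -/
def degeneration (m : MonomialOrder (Fin n)) (w : Fin n → ℕ) (I : Ideal (PS K n)) (t : K) :
    Ideal (PS K n) :=
  if ht : t = 0 then initialIdealO K n (· ≺[m] ·) I
  else I.map (coordChange K n (torus w (Units.mk0 t ht))⁻¹)

theorem degeneration_zero (w : Fin n → ℕ) :
    degeneration m w I 0 = initialIdealO K n (· ≺[m] ·) I :=
  dif_pos rfl

theorem degeneration_unit (w : Fin n → ℕ) (t : Kˣ) :
    degeneration m w I t = I.map (coordChange K n (torus w t)⁻¹) := by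
  rw [degeneration, dif_neg t.ne_zero, Units.mk0_val]

theorem isHomog_degeneration (hI : IsHomog K n I) (w : Fin n → ℕ) (t : K) :
    IsHomog K n (degeneration m w I t) := by
  rcases eq_or_ne t 0 with rfl | ht
  · rw [degeneration_zero]
    exact isHomog_initialIdealO
  · lift t to Kˣ using ht.isUnit
    rw [degeneration_unit]
    exact hI.map_coordChange _

theorem isMonomialBasis_degeneration (m : MonomialOrder (Fin n)) (w : Fin n → ℕ)
    (I : Ideal (PS K n)) (t : K) :
    IsMonomialBasis (standardMonomials m I) (degeneration m w I t) := by
  rcases eq_or_ne t 0 with rfl | ht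
  · rw [degeneration_zero]
    exact isMonomialBasis_standardMonomials_initialIdealO m I
  · lift t to Kˣ using ht.isUnit
    rw [degeneration_unit]
    exact (isMonomialBasis_standardMonomials m I).map_torus_inv w t

/-- The weight homogenization of `q` with respect to the exponent `v`, evaluated at `t`: the
coefficient at `c` is multiplied by `t ^ (w·v - w·c)`, which is only meaningful when
`w·c ≤ w·v` for all exponents `c` of `q`. -/
def homogenizeAt (w : Fin n → ℕ) (v : Fin n →₀ ℕ) (q : PS K n) (t : K) : PS K n :=
  ∑ c ∈ q.support, t ^ (Finsupp.weight w v - Finsupp.weight w c) • monomial c (coeff c q)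

theorem coordChange_torus_homogenizeAt {w : Fin n → ℕ} {v : Fin n →₀ ℕ} {q : PS K n}
    (hq : ∀ c ∈ q.support, Finsupp.weight w c ≤ Finsupp.weight w v) (t : Kˣ) :
    coordChange K n (torus w t) (homogenizeAt w v q t) = (t : K) ^ Finsupp.weight w v • q := by
  conv_rhs => rw [← support_sum_monomial_coeff q, Finset.smul_sum]
  rw [homogenizeAt, map_sum]
  refine Finset.sum_congr rfl fun c hc => ?_
  rw [map_smul, coordChange_torus_monomial, smul_smul, ← pow_add, Nat.sub_add_cancel (hq c hc)]

theorem homogenizeAt_zero {w : Fin n → ℕ} {v : Fin n →₀ ℕ} {q : PS K n}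
    (hq : ∀ c ∈ q.support, c = v ∨ Finsupp.weight w c < Finsupp.weight w v) :
    homogenizeAt w v q 0 = monomial v (coeff v q) := by
  rw [homogenizeAt, Finset.sum_eq_single v]
  · rw [Nat.sub_self, pow_zero, one_smul]
  · intro c hc hcv
    rw [zero_pow (Nat.sub_pos_of_lt ((hq c hc).resolve_left hcv)).ne', zero_smul]
  · intro hv
    rw [notMem_support_iff.1 hv, monomial_zero, smul_zero]

theorem homogenizeAt_mem_restrictSupport {s : Set (Fin n →₀ ℕ)} {q : PS K n}
    (hq : q ∈ restrictSupport K s) (w : Fin n → ℕ) (v : Fin n →₀ ℕ) (t : K) :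
    homogenizeAt w v q t ∈ restrictSupport K s :=
  Submodule.sum_mem _ fun _ hc => Submodule.smul_mem _ _ <|
    (monomial_mem_restrictSupport K).2 (Or.inl (hq hc))

theorem monomial_sub_homogenizeAt_mem_degeneration {w : Fin n → ℕ} {v : Fin n →₀ ℕ} {q : PS K n}
    (hqs : q ∈ restrictSupport K (standardMonomials m I)) (hqI : monomial v 1 - q ∈ I)
    (hq : ∀ c ∈ q.support, c = v ∨ Finsupp.weight w c < Finsupp.weight w v) (t : K) :
    monomial v 1 - homogenizeAt w v q t ∈ degeneration m w I t := by
  rcases eq_or_ne t 0 with rfl | ht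
  · rw [degeneration_zero, homogenizeAt_zero hq]
    have hB := isMonomialBasis_standardMonomials m I
    by_cases hv : v ∈ standardMonomials m I
    · let e : restrictSupport K (standardMonomials m I) :=
        ⟨monomial v 1, (monomial_mem_restrictSupport K).2 (Or.inl hv)⟩
      have hqv : q = monomial v 1 := congrArg Subtype.val <|
        (hB.remainder_eq (q := ⟨q, hqs⟩) hqI).symm.trans (hB.remainder_coe e)
      rw [hqv, coeff_monomial, if_pos rfl, sub_self]
      exact zero_mem _
    · have hqv : coeff v q = 0 := notMem_support_iff.1 fun hvq => hv (hqs hvq)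
      rw [hqv, monomial_zero, sub_zero,
        mem_initialIdealO_iff]
      intro c hc
      rw [Finset.mem_singleton.1 (support_monomial_subset hc)]
      simpa [standardMonomials] using hv
  · lift t to Kˣ using ht.isUnit
    have hle : ∀ c ∈ q.support, Finsupp.weight w c ≤ Finsupp.weight w v := fun c hc =>
      (hq c hc).elim (fun h => h ▸ le_rfl) le_of_lt
    rw [degeneration_unit, mem_map_coordChange_inv_iff, map_sub, coordChange_torus_monomial,
      coordChange_torus_homogenizeAt hle, ← smul_sub]
    exact Submodule.smul_mem (I.restrictScalars K) _ hqI

theorem homogenizeAt_mem_regularMaps (w : Fin n → ℕ) (v : Fin n →₀ ℕ) (q : PS K n) :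
    homogenizeAt w v q ∈ regularMaps (lineFunctions K) (PS K n) := by
  have hpow (e : ℕ) : (fun t => t ^ e) ∈ lineFunctions K :=
    pow_mem (coordinate_mem_regularFunctions (fun t (_ : Unit) => t) ()) e
  convert Submodule.sum_mem _ fun c (_ : c ∈ q.support) => smul_mem_regularMaps
    (hpow (Finsupp.weight w v - Finsupp.weight w c))
    (const_mem_regularMaps (monomial c (coeff c q))) using 1
  ext1 t
  rw [Finset.sum_apply]
  rfl

theorem degree_eq_of_mem_support_of_mem_polyGrade {d : ℤ} {f : PS K n}
    (hf : f ∈ polyGrade K n d) {c : Fin n →₀ ℕ} (hc : c ∈ f.support) : (c.degree : ℤ) = d := by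
  rcases lt_or_ge d 0 with hd | hd
  · rw [polyGrade_of_neg hd, Submodule.mem_bot] at hf
    simp [hf] at hc
  · lift d to ℕ using hd
    rw [polyGrade_natCast, mem_homogeneousSubmodule] at hf
    have hcd : c.degree = d := Finsupp.degree_eq_weight_one (R := ℕ) ▸ hf (mem_support_iff.1 hc)
    rw [hcd]

theorem weight_lt_of_mem_support_remainder (hI : IsHomog K n I) {D : ℕ} {w : Fin n → ℕ}
    (hw : IsWeightUpTo m D w) {v : Fin n →₀ ℕ} (hv : v.degree ≤ D) :
    ∀ c ∈ ((isMonomialBasis_standardMonomials m I).remainder (monomial v 1) : PS K n).support,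
      c = v ∨ Finsupp.weight w c < Finsupp.weight w v := by
  have hB := isMonomialBasis_standardMonomials m I
  intro c hc
  have hdeg : c.degree = v.degree := by
    have hv : monomial v (1 : K) ∈ polyGrade K n v.degree := by
      rw [polyGrade_natCast]
      exact isHomogeneous_monomial _ rfl
    exact_mod_cast degree_eq_of_mem_support_of_mem_polyGrade
      (hB.remainder_mem_polyGrade hI hv) hc
  obtain ⟨q, hqs, hqI, hqm⟩ := exists_standard_remainder m I (monomial v (1 : K))
  rw [hB.remainder_eq (q := ⟨q, hqs⟩) hqI] at hc
  have hcv : c ≼[m] v := (m.le_degree hc).trans (hqm.trans (m.degree_monomial_le _))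
  exact hcv.eq_or_lt.imp (fun h => m.toSyn.injective h) (hw c v (hdeg.trans_le hv) hv)

theorem remainder_degeneration_monomial (hI : IsHomog K n I) {D : ℕ} {w : Fin n → ℕ}
    (hw : IsWeightUpTo m D w) {v : Fin n →₀ ℕ} (hv : v.degree ≤ D) (t : K) :
    ((isMonomialBasis_degeneration m w I t).remainder (monomial v 1) : PS K n) =
      homogenizeAt w v
        ((isMonomialBasis_standardMonomials m I).remainder (monomial v 1)) t := by
  have hB := isMonomialBasis_standardMonomials m I
  refine congrArg Subtype.val ((isMonomialBasis_degeneration m w I t).remainder_eq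
    (q := ⟨_, homogenizeAt_mem_restrictSupport (hB.remainder (monomial v 1)).2 w v t⟩) ?_)
  exact monomial_sub_homogenizeAt_mem_degeneration (hB.remainder _).2 (hB.sub_remainder_mem _)
    (weight_lt_of_mem_support_remainder hI hw hv) t

theorem isRegularFamily_degeneration (hI : IsHomog K n I) {j : ℤ} {w : Fin n → ℕ}
    (hw : IsWeightUpTo m j.toNat w) :
    IsRegularFamily (lineFunctions K) j (standardMonomials m I) (degeneration m w I) where
  isHomog := isHomog_degeneration hI w
  isMonomialBasis := isMonomialBasis_degeneration m w I
  remainder_mem d hd f hf := by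
    have hB := isMonomialBasis_standardMonomials m I
    have hmonomial : ∀ v ∈ f.support,
        (fun t => (isMonomialBasis_degeneration m w I t).remainder (monomial v 1)) ∈
          regularMaps (lineFunctions K) (restrictSupport K (standardMonomials m I)) := by
      intro v hv
      have hvd := degree_eq_of_mem_support_of_mem_polyGrade hf hv
      convert comp_mem_regularMaps hB.remainder
        (homogenizeAt_mem_regularMaps w v (hB.remainder (monomial v 1))) using 2 with t
      rw [← remainder_degeneration_monomial hI hw (by lia), hB.remainder_coe]
    convert Submodule.sum_mem _ fun v hv => smul_mem_regularMaps
      ((lineFunctions K).algebraMap_mem (coeff v f)) (hmonomial v hv) using 1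
    ext1 t
    conv_lhs => rw [← support_sum_monomial_coeff f, map_sum]
    rw [Finset.sum_apply]
    refine Finset.sum_congr rfl fun v _ => ?_
    rw [← mul_one (coeff v f), ← smul_eq_mul, ← smul_monomial, map_smul, smul_eq_mul, mul_one]
    rfl

end Degeneration

/-! ### Comparison with initial ideals -/

section Comparison

open scoped MonomialOrder

variable {K : Type} [Field K] {n : ℕ} {m m' : MonomialOrder (Fin n)} {I J : Ideal (PS K n)}

theorem exists_quotRank_initialIdealO_le [Infinite K] (hm : HasWeights m) (hm' : HasWeights m')
    (hI : IsHomog K n I) (hJ : IsHomog K n J) (i : ℕ) (j : ℤ) :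
    ∃ h h' : GL (Fin n) K,
      quotRank (initialIdealO K n (· ≺[m] ·) I) (initialIdealO K n (· ≺[m'] ·) J) i j ≤
        quotRank (I.map (coordChange K n h)) (J.map (coordChange K n h')) i j := by
  obtain ⟨w, hw⟩ := hm j.toNat
  obtain ⟨w', hw'⟩ := hm' j.toNat
  obtain ⟨a, ha, ha₀, hle⟩ := (isRegularFamily_degeneration hI hw).exists_mem_quotRank_le
    (isRegularFamily_degeneration hJ hw') i 0
  obtain ⟨t, ht⟩ := exists_unit_ne_zero_of_mem_lineFunctions ha ha₀
  refine ⟨(torus w t)⁻¹, (torus w' t)⁻¹, ?_⟩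
  simpa only [degeneration_zero, degeneration_unit] using hle t ht

theorem generally_quotRank_initialIdealO_le [Infinite K] (hm : HasWeights m)
    (hm' : HasWeights m') (hI : IsHomog K n I) (hJ : IsHomog K n J) (h₁ h₂ : GL (Fin n) K)
    (i : ℕ) (j : ℤ) :
    generally K n fun g =>
      quotRank (initialIdealO K n (· ≺[m] ·) (I.map (coordChange K n h₁)))
        (initialIdealO K n (· ≺[m'] ·) (J.map (coordChange K n h₂))) i j ≤
      quotRank I (J.map (coordChange K n g)) i j := by
  obtain ⟨h, h', hle⟩ := exists_quotRank_initialIdealO_le hm hm' (hI.map_coordChange h₁)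
    (hJ.map_coordChange h₂) i j
  rw [← map_coordChange_mul, ← map_coordChange_mul, quotRank_map_coordChange_left_right] at hle
  exact (generally_quotRank_le hI hJ _ i j).mono fun _ => hle.trans

theorem quotDim_map_coordChange_left (g : GL (Fin n) K) (I J : Ideal (PS K n)) (i : ℕ) (j : ℤ) :
    quotDim (I.map (coordChange K n g)) J i j = quotDim I J i j :=
  (strandDim_congr (isGradedEquiv_quotCoordEquiv g I) (IsGradedEquiv.refl _) i j).symm

theorem quotDim_map_coordChange_right (g : GL (Fin n) K) (I J : Ideal (PS K n)) (i : ℕ) (j : ℤ) :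
    quotDim I (J.map (coordChange K n g)) i j = quotDim I J i j :=
  (strandDim_congr (IsGradedEquiv.refl _) (isGradedEquiv_quotCoordEquiv g J) i j).symm

theorem quotDim_initialIdealO (m m' : MonomialOrder (Fin n)) (hI : IsHomog K n I)
    (hJ : IsHomog K n J) (i : ℕ) (j : ℤ) :
    quotDim (initialIdealO K n (· ≺[m] ·) I) (initialIdealO K n (· ≺[m'] ·) J) i j =
      quotDim I J i j := by
  rw [quotDim_eq_of_isMonomialBasis (isMonomialBasis_standardMonomials_initialIdealO m I)
      isHomog_initialIdealO (isMonomialBasis_standardMonomials_initialIdealO m' J)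
      isHomog_initialIdealO,
    quotDim_eq_of_isMonomialBasis (isMonomialBasis_standardMonomials m I) hI
      (isMonomialBasis_standardMonomials m' J) hJ]

theorem torQQ_le_of_quotRank_le {I' J' : Ideal (PS K n)} (hI : IsHomog K n I)
    (hJ : IsHomog K n J) (hI' : IsHomog K n I') (hJ' : IsHomog K n J') {j : ℤ}
    (hdim : ∀ i, quotDim I J i j = quotDim I' J' i j)
    (hrank : ∀ i ∈ Finset.range (j.toNat + 1), quotRank I' J' i j ≤ quotRank I J i j) (i : ℕ) :
    torQQ K n I J i j ≤ torQQ K n I' J' i j := by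
  rcases lt_or_ge j i with hij | hij
  · rw [torQQ_eq_zero_of_lt hI hJ hij]
    exact Nat.zero_le _
  have hrank' (k : ℕ) (hk : k ≤ i) : quotRank I' J' k j ≤ quotRank I J k j :=
    hrank k (Finset.mem_range.2 (by lia))
  cases i with
  | zero =>
    rw [torQQ_zero hI hJ, torQQ_zero hI' hJ', hdim]
    exact Nat.sub_le_sub_left (hrank' 0 le_rfl) _
  | succ i =>
    rw [torQQ_succ hI hJ, torQQ_succ hI' hJ', hdim]
    exact tsub_le_tsub (Nat.sub_le_sub_left (hrank' i i.le_succ) _) (hrank' (i + 1) le_rfl)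

theorem tor_dim_general_le_gins_quotients_general [Infinite K] (hm : HasWeights m)
    (hm' : HasWeights m') (hI : IsHomog K n I) (hJ : IsHomog K n J) (h₁ h₂ : GL (Fin n) K)
    (j : ℤ) :
    generally K n fun g => ∀ i : ℕ, torQQ K n I (J.map (coordChange K n g)) i j ≤
      torQQ K n (initialIdealO K n (· ≺[m] ·) (I.map (coordChange K n h₁)))
        (initialIdealO K n (· ≺[m'] ·) (J.map (coordChange K n h₂))) i j := by
  have hranks := generally_forall_mem (Finset.range (j.toNat + 1)) fun i _ =>
    generally_quotRank_initialIdealO_le hm hm' hI hJ h₁ h₂ i j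
  refine hranks.mono fun g hg => torQQ_le_of_quotRank_le hI (hJ.map_coordChange g)
    isHomog_initialIdealO isHomog_initialIdealO (fun i => ?_) hg
  rw [quotDim_initialIdealO m m' (hI.map_coordChange h₁) (hJ.map_coordChange h₂),
    quotDim_map_coordChange_left, quotDim_map_coordChange_right, quotDim_map_coordChange_right]

end Comparison

/-- **Theorem 2.8(i)** (Caviglia–Murai): fix `j` and homogeneous ideals `I, J ⊆ S`.  For a
general change of coordinates `g ∈ GL_n(K)`,
`dim_K Tor_i(S/I, S/g(J))_j ≤ dim_K Tor_i(S/Gin_lex(I), S/Gin_oplex(J))_j` for all `i`. -/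
theorem tor_dim_general_le_gins_quotients [Infinite K] (j : ℤ)
    (I J : Ideal (PS K n)) (hI : IsHomog K n I) (hJ : IsHomog K n J)
    (GinI : Ideal (PS K n))
    (hGinI : generally K n (fun g =>
      initialIdealO K n (lexLt n) (Ideal.map (coordChange K n g) I) = GinI))
    (GinJ : Ideal (PS K n))
    (hGinJ : generally K n (fun g =>
      initialIdealO K n (oplexLt n) (Ideal.map (coordChange K n g) J) = GinJ))
 :
    generally K n (fun g => ∀ i : ℕ,
      torQQ K n I (Ideal.map (coordChange K n g) J) i j ≤ torQQ K n GinI GinJ i j) := by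
  obtain ⟨h₁, rfl⟩ := hGinI.exists
  obtain ⟨h₂, rfl⟩ := hGinJ.exists
  exact tor_dim_general_le_gins_quotients_general (hasWeights_lex n) (hasWeights_oplexOrder n)
    hI hJ h₁ h₂ j

end
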